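/- arXiv:2409.11614 — 2 statements merged into one kernel-verified Lean document; each statement's English description precedes it below -/
import Mathlib

section
/- Every Euclidean minimum bichromatic spanning tree of a bicolored point set in general position is quasi-plane: no three of its edges pairwise cross each other. -/
open scoped Classical

noncomputable section

/-- Points in the Euclidean plane. -/
abbrev Pt : Type := EuclideanSpace ℝ (Fin 2)

/-- `S` is in general position: no three (distinct) points of `S` are collinear. -/
def GenPos (S : Finset Pt) : Prop :=
  ∀ p ∈ S, ∀ q ∈ S, ∀ r ∈ S, p ≠ q → p ≠ r → q ≠ r →
    ¬ Collinear ℝ ({p, q, r} : Set Pt)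

/-- The closed segments `[a,b]` and `[c,d]` cross: they share a point that is
interior to both segments. -/
def SegCross (a b c d : Pt) : Prop :=
  ∃ p : Pt, p ∈ openSegment ℝ a b ∧ p ∈ openSegment ℝ c d

/-- Two unordered edges (over vertices lying in the plane) cross. -/
def EdgeCross {S : Finset Pt} (e₁ e₂ : Sym2 ↥S) : Prop :=
  ∃ a b c d : ↥S, e₁ = s(a, b) ∧ e₂ = s(c, d) ∧ SegCross ↑a ↑b ↑c ↑d

/-- A (straight-line drawn) graph is plane if no two of its edges cross. -/
def PlaneGraph {S : Finset Pt} (G : SimpleGraph ↥S) : Prop :=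
  ∀ e₁ ∈ G.edgeSet, ∀ e₂ ∈ G.edgeSet, e₁ ≠ e₂ → ¬ EdgeCross e₁ e₂

/-- Every edge has one red (`true`) and one blue (`false`) endpoint. -/
def Bichromatic {S : Finset Pt} (col : Pt → Bool) (G : SimpleGraph ↥S) : Prop :=
  ∀ u v : ↥S, G.Adj u v → col ↑u ≠ col ↑v

/-- The Euclidean length of an unordered edge. -/
def edgeLen {S : Finset Pt} : Sym2 ↥S → ℝ :=
  Sym2.lift ⟨fun a b => dist (a : Pt) (b : Pt), fun _ _ => dist_comm _ _⟩

/-- The total Euclidean length of the edges of a graph drawn with straight-line edges. -/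
def graphLen {S : Finset Pt} (G : SimpleGraph ↥S) : ℝ :=
  ∑ᶠ e ∈ G.edgeSet, edgeLen e

/-- A bichromatic spanning tree of `S`. -/
def IsBST {S : Finset Pt} (col : Pt → Bool) (G : SimpleGraph ↥S) : Prop :=
  G.IsTree ∧ Bichromatic col G

/-- A minimum bichromatic spanning tree of `S`. -/
def IsMinBST {S : Finset Pt} (col : Pt → Bool) (G : SimpleGraph ↥S) : Prop :=
  IsBST col G ∧ ∀ G' : SimpleGraph ↥S, IsBST col G' → graphLen G ≤ graphLen G'

/-!
Delete two edges `r₁b₁` and `r₂b₂`, each with a red end `rᵢ` and a blue end `bᵢ`, from the tree: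
some end of the first stays connected to some end of the second. If the edges cross, these two ends
have different colors, for otherwise `r₁b₁` could be exchanged for one of `r₁b₂`, `r₂b₁` and `r₂b₂`
for the other, and uncrossing shortens the total length. So the tree path between two crossing edges
runs from the blue end of one to the red end of the other, which orients the pair. Among three
pairwise crossing edges two of these orientations concatenate, say from `r₁b₁` to `r₂b₂` to `r₃b₃`.
Then `r₁b₁`, `r₂b₂`, `r₃b₃` can be exchanged for `r₁b₂`, `r₃b₁`, `r₂b₃` respectively, so none of
these is shorter; but three pairwise crossing segments satisfy
`|r₁b₂| + |r₂b₃| + |r₃b₁| < |r₁b₁| + |r₂b₂| + |r₃b₃|`.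
-/

section Segments

variable {E : Type*}

theorem collinear_of_mem_openSegment_of_wbtw [AddCommGroup E] [Module ℝ E] {a b c p : E}
    (hpb : p ∈ openSegment ℝ a b) (hpc : Wbtw ℝ a p c) : Collinear ℝ {a, b, c} := by
  by_cases hap : a = p
  · subst hap
    rw [left_mem_openSegment_iff.1 hpb, Set.insert_eq_of_mem (Set.mem_insert _ _)]
    exact collinear_pair ℝ b c
  · have hpb : Wbtw ℝ a p b := mem_segment_iff_wbtw.1 (openSegment_subset_segment ℝ a b hpb)
    exact collinear_triple_of_mem_affineSpan_pair (left_mem_affineSpan_pair ℝ a p)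
      (hpb.collinear.mem_affineSpan_of_mem_of_ne (by simp) (by simp) (by simp) hap)
      (hpc.collinear.mem_affineSpan_of_mem_of_ne (by simp) (by simp) (by simp) hap)

theorem disjoint_openSegment_of_not_collinear [AddCommGroup E] [Module ℝ E] {a b c : E}
    (habc : ¬ Collinear ℝ {a, b, c}) : Disjoint (openSegment ℝ a b) (openSegment ℝ a c) :=
  Set.disjoint_left.2 fun _ hpb hpc => habc <| collinear_of_mem_openSegment_of_wbtw hpb <|
    mem_segment_iff_wbtw.1 (openSegment_subset_segment ℝ a c hpc)

variable [NormedAddCommGroup E] [NormedSpace ℝ E]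

theorem dist_add_dist_eq_or_of_mem_segment {a b p q : E} (hp : p ∈ segment ℝ a b)
    (hq : q ∈ segment ℝ a b) :
    dist a p + dist p q = dist a q ∨ dist a q + dist p q = dist a p := by
  rw [segment_eq_image_lineMap] at hp hq
  obtain ⟨s, ⟨hs, -⟩, rfl⟩ := hp
  obtain ⟨t, ⟨ht, -⟩, rfl⟩ := hq
  simp only [dist_left_lineMap, dist_lineMap_lineMap, Real.norm_of_nonneg hs,
    Real.norm_of_nonneg ht, Real.dist_eq]
  rcases le_total s t with hst | hts
  · left; rw [abs_of_nonpos (sub_nonpos.2 hst)]; ring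
  · right; rw [abs_of_nonneg (sub_nonneg.2 hts)]; ring

variable [StrictConvexSpace ℝ E]

theorem dist_lt_of_mem_openSegment {a b c p : E} (habc : ¬ Collinear ℝ {a, b, c})
    (hp : p ∈ openSegment ℝ a b) : dist a c < dist a p + dist p c :=
  (dist_triangle a p c).lt_of_ne fun heq =>
    habc (collinear_of_mem_openSegment_of_wbtw hp (dist_add_dist_eq_iff.1 heq.symm))

theorem dist_add_dist_lt_of_openSegment_inter {a₁ b₁ a₂ b₂ : E}
    (hcol : ¬ Collinear ℝ {a₁, b₁, b₂})
    (hcross : (openSegment ℝ a₁ b₁ ∩ openSegment ℝ a₂ b₂).Nonempty) :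
    dist a₁ b₂ + dist a₂ b₁ < dist a₁ b₁ + dist a₂ b₂ := by
  obtain ⟨p, hp₁, hp₂⟩ := hcross
  linarith only [dist_lt_of_mem_openSegment hcol hp₁, dist_triangle a₂ p b₁,
    dist_add_dist_of_mem_segment (openSegment_subset_segment ℝ a₁ b₁ hp₁),
    dist_add_dist_of_mem_segment (openSegment_subset_segment ℝ a₂ b₂ hp₂)]

theorem dist_add_dist_add_dist_lt_of_openSegment_inter {a₁ b₁ a₂ b₂ a₃ b₃ : E}
    (hcol : ¬ Collinear ℝ {a₁, b₁, b₂})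
    (h₁₂ : (openSegment ℝ a₁ b₁ ∩ openSegment ℝ a₂ b₂).Nonempty)
    (h₁₃ : (openSegment ℝ a₁ b₁ ∩ openSegment ℝ a₃ b₃).Nonempty)
    (h₂₃ : (openSegment ℝ a₂ b₂ ∩ openSegment ℝ a₃ b₃).Nonempty) :
    dist a₁ b₂ + dist a₂ b₃ + dist a₃ b₁ < dist a₁ b₁ + dist a₂ b₂ + dist a₃ b₃ := by
  obtain ⟨x, hx₁, hx₂⟩ := h₁₂
  obtain ⟨y, hy₂, hy₃⟩ := h₂₃
  obtain ⟨z, hz₁, hz₃⟩ := h₁₃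
  have direct₁ : dist a₁ b₂ < dist a₁ x + dist x b₂ := dist_lt_of_mem_openSegment hcol hx₁
  have direct₂ : dist a₂ b₃ ≤ dist a₂ y + dist y b₃ := dist_triangle _ _ _
  have direct₃ : dist a₃ b₁ ≤ dist a₃ z + dist z b₁ := dist_triangle _ _ _
  have detour₁ : dist a₁ b₂ < dist a₁ z + dist y z + dist y b₂ := by
    linarith only [dist_lt_of_mem_openSegment hcol hz₁, dist_triangle z y b₂, dist_comm y z]
  have detour₂ : dist a₂ b₃ ≤ dist a₂ x + dist x z + dist z b₃ := dist_triangle4 _ _ _ _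
  have detour₃ : dist a₃ b₁ ≤ dist a₃ y + dist x y + dist x b₁ := by
    simpa only [dist_comm y x] using dist_triangle4 a₃ y x b₁
  replace hx₁ := openSegment_subset_segment ℝ _ _ hx₁
  replace hx₂ := openSegment_subset_segment ℝ _ _ hx₂
  replace hy₂ := openSegment_subset_segment ℝ _ _ hy₂
  replace hy₃ := openSegment_subset_segment ℝ _ _ hy₃
  replace hz₁ := openSegment_subset_segment ℝ _ _ hz₁
  replace hz₃ := openSegment_subset_segment ℝ _ _ hz₃
  have split_x₁ := dist_add_dist_of_mem_segment hx₁
  have split_x₂ := dist_add_dist_of_mem_segment hx₂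
  have split_y₂ := dist_add_dist_of_mem_segment hy₂
  have split_y₃ := dist_add_dist_of_mem_segment hy₃
  have split_z₁ := dist_add_dist_of_mem_segment hz₁
  have split_z₃ := dist_add_dist_of_mem_segment hz₃
  -- In each case the three chosen routes together are exactly as long as the three segments.
  rcases dist_add_dist_eq_or_of_mem_segment hx₁ hz₁ with xz | zx
  · linarith only [xz, direct₁, detour₂, direct₃, split_x₂, split_z₁, split_z₃]
  rcases dist_add_dist_eq_or_of_mem_segment hy₂ hx₂ with yx | xy
  · linarith only [yx, direct₁, direct₂, detour₃, split_x₁, split_x₂, split_y₃, dist_comm x y]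
  rcases dist_add_dist_eq_or_of_mem_segment hz₃ hy₃ with zy | yz
  · linarith only [zy, detour₁, direct₂, direct₃, split_y₂, split_y₃, split_z₁, dist_comm y z]
  · linarith only [zx, xy, yz, detour₁, detour₂, detour₃, split_x₁, split_y₂, split_z₃,
      dist_comm x y, dist_comm y z]

end Segments

section Exchange

open SimpleGraph

variable {V : Type*} {G : SimpleGraph V}

theorem exists_mem_reachable_deleteEdges {e : Sym2 V} {u w : V} (h : G.Reachable u w)
    (hw : w ∈ e) : ∃ v ∈ e, (G.deleteEdges {e}).Reachable u v := by
  obtain ⟨p⟩ := h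
  induction p with
  | nil => exact ⟨_, hw, .rfl⟩
  | @cons u v w huv _ ih =>
    by_cases he : s(u, v) = e
    · exact ⟨u, he ▸ Sym2.mem_mk_left u v, .rfl⟩
    · obtain ⟨t, ht, hvt⟩ := ih hw
      exact ⟨t, ht, (deleteEdges_adj.2 ⟨huv, he⟩).reachable.trans hvt⟩

theorem exists_mem_mem_reachable_deleteEdges_pair (hG : G.Preconnected) (e f : Sym2 V) :
    ∃ u ∈ e, ∃ v ∈ f, (G.deleteEdges {e, f}).Reachable u v := by
  obtain ⟨u, hu, huf⟩ :=
    exists_mem_reachable_deleteEdges (hG f.out.1 e.out.1) (Sym2.out_fst_mem e)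
  obtain ⟨v, hv, huv⟩ := exists_mem_reachable_deleteEdges huf.symm (Sym2.out_fst_mem f)
  rw [deleteEdges_deleteEdges, Set.singleton_union] at huv
  exact ⟨u, hu, v, hv, huv⟩

theorem not_reachable_deleteEdges_of_isAcyclic {a b : V} (hG : G.IsAcyclic) (hab : G.Adj a b) :
    ¬ (G.deleteEdges {s(a, b)}).Reachable a b :=
  isBridge_iff.1 (isAcyclic_iff_forall_adj_isBridge.1 hG hab)

theorem isTree_deleteEdges_sup_edge {a b c d : V} (hG : G.IsTree) (hab : G.Adj a b)
    (hac : (G.deleteEdges {s(a, b)}).Reachable a c)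
    (hbd : (G.deleteEdges {s(a, b)}).Reachable b d) :
    (G.deleteEdges {s(a, b)} ⊔ edge c d).IsTree := by
  have hcd : ¬ (G.deleteEdges {s(a, b)}).Reachable c d := fun h =>
    not_reachable_deleteEdges_of_isAcyclic hG.isAcyclic hab (hac.trans (h.trans hbd.symm))
  refine ⟨(connected_iff_exists_forall_reachable _).2 ⟨c, fun w => ?_⟩,
    (hG.isAcyclic.anti (deleteEdges_le _)).sup_edge_of_not_reachable hcd⟩
  have hadj : (G.deleteEdges {s(a, b)} ⊔ edge c d).Adj c d :=
    .inr ((edge_adj ..).2 ⟨.inl ⟨rfl, rfl⟩, fun h => hcd (h ▸ .rfl)⟩)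
  obtain ⟨v, hv, hwv⟩ := exists_mem_reachable_deleteEdges (hG.connected.preconnected w a)
    (Sym2.mem_mk_left a b)
  rcases Sym2.mem_iff.1 hv with rfl | rfl
  · exact (hac.symm.trans hwv.symm).mono le_sup_left
  · exact hadj.reachable.trans ((hbd.symm.trans hwv.symm).mono le_sup_left)

end Exchange

section ExchangeMinimal

variable {V E : Type*}

/-- A tree on the 2-colored vertex set `V`, placed by `x` in a space with a distance, whose edges
are bichromatic and which admits no improving exchange: replacing one edge by another bichromatic
pair never gives a tree of smaller total length. This local form of minimality needs no sum of edge
lengths, so it also makes sense for infinite `V`. -/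
structure IsExchangeMinimal [Dist E] (x : V → E) (col : V → Bool) (T : SimpleGraph V) : Prop where
  isTree : T.IsTree
  col_ne : ∀ ⦃u v⦄, T.Adj u v → col u ≠ col v
  dist_le : ∀ ⦃a b c d⦄, T.Adj a b → col c ≠ col d →
    (T.deleteEdges {s(a, b)} ⊔ SimpleGraph.edge c d).IsTree → dist (x a) (x b) ≤ dist (x c) (x d)

/-- General position relative to the edges of a drawn graph: the line spanned by an edge contains
no vertex other than the two ends of that edge. -/
def EdgesInGenPos [AddCommGroup E] [Module ℝ E] (x : V → E) (G : SimpleGraph V) : Prop :=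
  ∀ ⦃u v w⦄, G.Adj u v → w ≠ u → w ≠ v → ¬ Collinear ℝ {x u, x v, x w}

/-- The relative interior of an edge drawn as a straight segment. Two edges cross when their open
edges meet. -/
def openEdge [AddCommGroup E] [Module ℝ E] (x : V → E) : Sym2 V → Set E :=
  Sym2.lift ⟨fun u v => openSegment ℝ (x u) (x v), fun _ _ => openSegment_symm ..⟩

/-- A straight-line drawing is quasi-plane if no three of its edges cross pairwise. -/
def IsQuasiPlane [AddCommGroup E] [Module ℝ E] (x : V → E) (G : SimpleGraph V) : Prop :=
  ∀ ⦃e₁ e₂ e₃⦄, e₁ ∈ G.edgeSet → e₂ ∈ G.edgeSet → e₃ ∈ G.edgeSet →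
    e₁ ≠ e₂ → e₁ ≠ e₃ → e₂ ≠ e₃ →
    ¬ ((openEdge x e₁ ∩ openEdge x e₂).Nonempty ∧ (openEdge x e₁ ∩ openEdge x e₃).Nonempty ∧
      (openEdge x e₂ ∩ openEdge x e₃).Nonempty)

/-- Two distinct edges that cross, oriented so that their tails have the same color: the tails stand
for the two red ends (say) and the heads for the two blue ends. -/
structure AreCrossingDarts [AddCommGroup E] [Module ℝ E] (x : V → E) (col : V → Bool)
    {T : SimpleGraph V} (d₁ d₂ : T.Dart) : Prop where
  col_eq : col d₁.fst = col d₂.fst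
  edge_ne : d₁.edge ≠ d₂.edge
  inter : (openEdge x d₁.edge ∩ openEdge x d₂.edge).Nonempty

/-- The path of a tree that joins two oriented edges leaves `d₁` at its head and enters `d₂` at its
tail. On pairwise crossing edges, oriented by color, this relation is total in a minimum tree.
-/
def Precedes {T : SimpleGraph V} (d₁ d₂ : T.Dart) : Prop :=
  (T.deleteEdges {d₁.edge, d₂.edge}).Reachable d₁.snd d₂.fst

variable {x : V → E} {col : V → Bool} {T : SimpleGraph V} {d₁ d₂ d₃ : T.Dart}

theorem Precedes.reachable_deleteEdges_left (h : Precedes d₁ d₂) :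
    (T.deleteEdges {d₁.edge}).Reachable d₁.snd d₂.fst :=
  h.mono (T.deleteEdges_anti (Set.singleton_subset_iff.2 (.inl rfl)))

theorem Precedes.reachable_deleteEdges_right (h : Precedes d₁ d₂) :
    (T.deleteEdges {d₂.edge}).Reachable d₁.snd d₂.fst :=
  h.mono (T.deleteEdges_anti (Set.singleton_subset_iff.2 (.inr rfl)))

theorem reachable_deleteEdges_of_edge_ne (h : d₁.edge ≠ d₂.edge) :
    (T.deleteEdges {d₂.edge}).Reachable d₁.fst d₁.snd :=
  (SimpleGraph.deleteEdges_adj.2 ⟨d₁.adj, h⟩).reachable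

theorem IsExchangeMinimal.dist_le_of_reachable [Dist E] (hT : IsExchangeMinimal x col T)
    (d : T.Dart) {u v : V} (huv : col u ≠ col v)
    (hu : (T.deleteEdges {d.edge}).Reachable d.fst u)
    (hv : (T.deleteEdges {d.edge}).Reachable d.snd v) :
    dist (x d.fst) (x d.snd) ≤ dist (x u) (x v) :=
  hT.dist_le d.adj huv (isTree_deleteEdges_sup_edge hT.isTree d.adj hu hv)

theorem exists_dart_edge_eq_and_col_fst (hcol : ∀ ⦃u v⦄, T.Adj u v → col u ≠ col v)
    {e : Sym2 V} (he : e ∈ T.edgeSet) : ∃ d : T.Dart, d.edge = e ∧ col d.fst = true := by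
  induction e with | h u v
  have huv : T.Adj u v := he
  cases hu : col u
  · exact ⟨⟨(v, u), huv.symm⟩, Sym2.eq_swap, Bool.eq_true_of_not_eq_false (hu ▸ hcol huv.symm)⟩
  · exact ⟨⟨(u, v), huv⟩, rfl, hu⟩

section CrossingDarts

variable [AddCommGroup E] [Module ℝ E]

theorem AreCrossingDarts.symm (h : AreCrossingDarts x col d₁ d₂) :
    AreCrossingDarts x col d₂ d₁ :=
  ⟨h.col_eq.symm, h.edge_ne.symm, Set.inter_comm _ _ ▸ h.inter⟩

theorem AreCrossingDarts.col_fst_ne_col_snd (h : AreCrossingDarts x col d₁ d₂)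
    (hcol : ∀ ⦃u v⦄, T.Adj u v → col u ≠ col v) : col d₁.fst ≠ col d₂.snd :=
  h.col_eq ▸ hcol d₂.adj

theorem AreCrossingDarts.not_collinear (h : AreCrossingDarts x col d₁ d₂)
    (hcol : ∀ ⦃u v⦄, T.Adj u v → col u ≠ col v) (hx : EdgesInGenPos x T) :
    ¬ Collinear ℝ {x d₁.fst, x d₁.snd, x d₂.snd} := by
  refine hx d₁.adj (fun heq => h.col_fst_ne_col_snd hcol (heq ▸ rfl)) fun hsnd => ?_
  have hfst : d₂.fst ≠ d₁.fst := fun hfst =>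
    h.edge_ne (congrArg₂ (fun u v => s(u, v)) hfst.symm hsnd.symm)
  have hncol : ¬ Collinear ℝ {x d₁.snd, x d₁.fst, x d₂.fst} :=
    hx d₁.adj.symm (hsnd ▸ d₂.adj.ne) hfst
  obtain ⟨p, hp₁, hp₂⟩ : (openSegment ℝ (x d₁.fst) (x d₁.snd) ∩
    openSegment ℝ (x d₂.fst) (x d₂.snd)).Nonempty := h.inter
  rw [openSegment_symm] at hp₁ hp₂
  rw [hsnd] at hp₂
  exact (disjoint_openSegment_of_not_collinear hncol).notMem_of_mem_left hp₁ hp₂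

end CrossingDarts

variable [NormedAddCommGroup E] [NormedSpace ℝ E] [StrictConvexSpace ℝ E]

theorem AreCrossingDarts.precedes_or_precedes (h : AreCrossingDarts x col d₁ d₂)
    (hT : IsExchangeMinimal x col T) (hx : EdgesInGenPos x T) :
    Precedes d₁ d₂ ∨ Precedes d₂ d₁ := by
  have hlt := dist_add_dist_lt_of_openSegment_inter (h.not_collinear hT.col_ne hx) h.inter
  have hcol₁₂ := h.col_fst_ne_col_snd hT.col_ne
  have hcol₂₁ := h.symm.col_fst_ne_col_snd hT.col_ne
  obtain ⟨u, hu, v, hv, huv⟩ :=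
    exists_mem_mem_reachable_deleteEdges_pair hT.isTree.connected.preconnected d₁.edge d₂.edge
  have huv₁ := huv.mono (T.deleteEdges_anti (Set.singleton_subset_iff.2 (.inl rfl)))
  have huv₂ := huv.symm.mono (T.deleteEdges_anti (Set.singleton_subset_iff.2 (.inr rfl)))
  rcases Sym2.mem_iff.1 hu with rfl | rfl <;> rcases Sym2.mem_iff.1 hv with rfl | rfl
  · have h₁ := hT.dist_le_of_reachable d₁ hcol₂₁ huv₁ .rfl
    have h₂ := hT.dist_le_of_reachable d₂ hcol₁₂ huv₂ .rfl
    linarith only [h₁, h₂, hlt]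
  · rw [Set.pair_comm] at huv
    exact .inr huv.symm
  · exact .inl huv
  · have h₁ := hT.dist_le_of_reachable d₁ hcol₁₂ .rfl huv₁
    have h₂ := hT.dist_le_of_reachable d₂ hcol₂₁ .rfl huv₂
    linarith only [h₁, h₂, hlt]

theorem IsExchangeMinimal.not_precedes_of_precedes (hT : IsExchangeMinimal x col T)
    (hx : EdgesInGenPos x T) (h₁₂ : AreCrossingDarts x col d₁ d₂)
    (h₁₃ : AreCrossingDarts x col d₁ d₃) (h₂₃ : AreCrossingDarts x col d₂ d₃)
    (hp₁₂ : Precedes d₁ d₂) : ¬ Precedes d₂ d₃ := by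
  intro hp₂₃
  have hle₁ : dist (x d₁.fst) (x d₁.snd) ≤ dist (x d₁.fst) (x d₂.snd) :=
    hT.dist_le_of_reachable d₁ (h₁₂.col_fst_ne_col_snd hT.col_ne) .rfl
      (hp₁₂.reachable_deleteEdges_left.trans (reachable_deleteEdges_of_edge_ne h₁₂.edge_ne.symm))
  have hle₂ : dist (x d₂.fst) (x d₂.snd) ≤ dist (x d₁.snd) (x d₃.fst) :=
    hT.dist_le_of_reachable d₂ (h₁₃.symm.col_fst_ne_col_snd hT.col_ne).symm
      hp₁₂.reachable_deleteEdges_right.symm hp₂₃.reachable_deleteEdges_left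
  have hle₃ : dist (x d₃.fst) (x d₃.snd) ≤ dist (x d₂.fst) (x d₃.snd) :=
    hT.dist_le_of_reachable d₃ (h₂₃.col_fst_ne_col_snd hT.col_ne)
      (hp₂₃.reachable_deleteEdges_right.symm.trans
        (reachable_deleteEdges_of_edge_ne h₂₃.edge_ne).symm) .rfl
  have hlt := dist_add_dist_add_dist_lt_of_openSegment_inter (h₁₂.not_collinear hT.col_ne hx)
    h₁₂.inter h₁₃.inter h₂₃.inter
  linarith only [hle₁, hle₂, hle₃, hlt, dist_comm (x d₁.snd) (x d₃.fst)]

theorem minBST_quasi_plane_general (hx : EdgesInGenPos x T) (hT : IsExchangeMinimal x col T) :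
    IsQuasiPlane x T := by
  rintro _ _ _ h₁ h₂ h₃ h₁₂ h₁₃ h₂₃ ⟨i₁₂, i₁₃, i₂₃⟩
  obtain ⟨d₁, rfl, hd₁⟩ := exists_dart_edge_eq_and_col_fst hT.col_ne h₁
  obtain ⟨d₂, rfl, hd₂⟩ := exists_dart_edge_eq_and_col_fst hT.col_ne h₂
  obtain ⟨d₃, rfl, hd₃⟩ := exists_dart_edge_eq_and_col_fst hT.col_ne h₃
  have c₁₂ : AreCrossingDarts x col d₁ d₂ := ⟨hd₁.trans hd₂.symm, h₁₂, i₁₂⟩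
  have c₁₃ : AreCrossingDarts x col d₁ d₃ := ⟨hd₁.trans hd₃.symm, h₁₃, i₁₃⟩
  have c₂₃ : AreCrossingDarts x col d₂ d₃ := ⟨hd₂.trans hd₃.symm, h₂₃, i₂₃⟩
  rcases c₁₂.precedes_or_precedes hT hx with p₁₂ | p₂₁ <;>
  rcases c₁₃.precedes_or_precedes hT hx with p₁₃ | p₃₁ <;>
  rcases c₂₃.precedes_or_precedes hT hx with p₂₃ | p₃₂
  -- Whichever way the three pairs are ordered, some two of the orders concatenate.
  all_goals grind [hT.not_precedes_of_precedes hx, AreCrossingDarts.symm]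

end ExchangeMinimal

section FiniteSets

variable {S : Finset Pt} {G : SimpleGraph ↥S}

theorem graphLen_deleteEdges_add_dist {a b : ↥S} (hab : G.Adj a b) :
    graphLen (G.deleteEdges {s(a, b)}) + dist (a : Pt) b = graphLen G := by
  have hedges : G.edgeSet = insert s(a, b) (G.deleteEdges {s(a, b)}).edgeSet := by
    rw [SimpleGraph.edgeSet_deleteEdges, Set.insert_sdiff_self_of_mem (G.mem_edgeSet.2 hab)]
  have hnotMem : s(a, b) ∉ (G.deleteEdges {s(a, b)}).edgeSet := by
    simp [SimpleGraph.edgeSet_deleteEdges]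
  rw [graphLen, graphLen, hedges, finsum_mem_insert _ hnotMem (Set.toFinite _), add_comm]
  rfl

theorem graphLen_sup_edge_le (G : SimpleGraph ↥S) (c d : ↥S) :
    graphLen (G ⊔ SimpleGraph.edge c d) ≤ graphLen G + dist (c : Pt) d := by
  by_cases hcd : c = d ∨ G.Adj c d
  · rw [sup_eq_left.2 ((SimpleGraph.edge_le_iff G).2 hcd)]
    exact le_add_of_nonneg_right dist_nonneg
  · obtain ⟨hne, hnadj⟩ := not_or.1 hcd
    have hnotMem : s(c, d) ∉ G.edgeSet := hnadj
    rw [graphLen, graphLen, SimpleGraph.edgeSet_sup, SimpleGraph.edgeSet_edge_of_ne hne,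
      Set.union_singleton, finsum_mem_insert _ hnotMem (Set.toFinite _), add_comm]
    rfl

theorem IsMinBST.isExchangeMinimal {col : Pt → Bool} (hG : IsMinBST col G) :
    IsExchangeMinimal Subtype.val (fun v => col v) G where
  isTree := hG.1.1
  col_ne := hG.1.2
  dist_le a b c d hab hcd htree := by
    have hbst : IsBST col (G.deleteEdges {s(a, b)} ⊔ SimpleGraph.edge c d) := by
      refine ⟨htree, fun u v huv => ?_⟩
      rcases huv with huv | huv
      · exact hG.1.2 u v (SimpleGraph.deleteEdges_le _ huv)
      · rcases ((SimpleGraph.edge_adj ..).1 huv).1 with ⟨rfl, rfl⟩ | ⟨rfl, rfl⟩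
        exacts [hcd, hcd.symm]
    linarith only [hG.2 _ hbst, graphLen_deleteEdges_add_dist hab,
      graphLen_sup_edge_le (G.deleteEdges {s(a, b)}) c d]

theorem GenPos.edgesInGenPos (hS : GenPos S) : EdgesInGenPos Subtype.val G :=
  fun u v w huv hwu hwv => hS u u.2 v v.2 w w.2 (Subtype.coe_ne_coe.2 huv.ne)
    (Subtype.coe_ne_coe.2 hwu.symm) (Subtype.coe_ne_coe.2 hwv.symm)

theorem EdgeCross.openEdge_inter {e f : Sym2 ↥S} (h : EdgeCross e f) :
    (openEdge Subtype.val e ∩ openEdge Subtype.val f).Nonempty := by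
  obtain ⟨_, _, _, _, rfl, rfl, hcross⟩ := h
  exact hcross

end FiniteSets

/-- Every Euclidean minimum bichromatic spanning tree of a bicolored
point set in general position is quasi-plane: no three of its edges pairwise cross. -/
theorem minBST_quasi_plane
    (S : Finset Pt) (col : Pt → Bool) (hgp : GenPos S)
    (T : SimpleGraph ↥S) (hT : IsMinBST col T)
    (e₁ e₂ e₃ : Sym2 ↥S)
    (h₁ : e₁ ∈ T.edgeSet) (h₂ : e₂ ∈ T.edgeSet) (h₃ : e₃ ∈ T.edgeSet)
    (h₁₂ : e₁ ≠ e₂) (h₁₃ : e₁ ≠ e₃) (h₂₃ : e₂ ≠ e₃) :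
    ¬ (EdgeCross e₁ e₂ ∧ EdgeCross e₁ e₃ ∧ EdgeCross e₂ e₃) := by
  rintro ⟨c₁₂, c₁₃, c₂₃⟩
  exact minBST_quasi_plane_general hgp.edgesInGenPos hT.isExchangeMinimal h₁ h₂ h₃ h₁₂ h₁₃ h₂₃
    ⟨c₁₂.openEdge_inter, c₁₃.openEdge_inter, c₂₃.openEdge_inter⟩
end
end

section
/- There exists a constant C > 0 such that for every bicolored point set S of n ≥ 2 points in the plane in general position containing at least one red and at least one blue point, there exists a plane bichromatic spanning tree of S whose total length is at most C·(1 + log₂ n) times the length of a minimum bichromatic spanning tree of S. In particular, the length of a minimum plane bichromatic spanning tree of S is at most O(log n) times the length of a minimum bichromatic spanning tree of S. -/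
open scoped Classical

noncomputable section

/-!
Divide the plane by a hierarchy of nested cells: the squares of a grid of mesh `δ`, merged in pairs
alternately horizontally and vertically. Inside each two-coloured cell, build a plane bichromatic
network bottom-up. Two networks separated by a line are connected by a single edge: the vertex of
one of them closest to the line sees both ends of some edge of the other, one of which has the
opposite colour. Hence a merger of two two-coloured cells needs one new edge, no longer than the
diameter of the merged cell, and then the tree `T` to be approximated has an edge leaving the first
of the two. If a cell is monochromatic, its points are added one at a time in a suitable order, and
then every edge of `T` at these points leaves the cell. So the new edges of each level are charged
to the edges of `T` cut on that level.

In a randomly shifted grid an edge of length `ℓ` is cut by the lines of spacing `s` with probability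
`O(ℓ / s)`, so each level costs `O(|T|)` on average. With `δ = |T| / n` there are `O(log n)` levels,
joining the points inside the finest cells costs `O(n δ)`, and rounding edge lengths up to multiples
of `δ` costs `O(δ)` for each of the `n - 1` edges of `T`.
-/

/-! ### Vertices of a plane drawing that are visible from above -/

/-- The height at abscissa `x` of the (non-vertical) line through `p` and `q`. -/
def lineHeight (p q : ℝ × ℝ) (x : ℝ) : ℝ := p.2 + (q.2 - p.2) / (q.1 - p.1) * (x - p.1)

lemma lineHeight_left (p q : ℝ × ℝ) : lineHeight p q p.1 = p.2 := by simp [lineHeight]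

lemma lineHeight_right {p q : ℝ × ℝ} (h : p.1 < q.1) : lineHeight p q q.1 = q.2 := by
  simp [lineHeight, div_mul_cancel₀ _ (sub_pos.mpr h).ne']

lemma continuous_lineHeight (p q : ℝ × ℝ) : Continuous (lineHeight p q) := by
  unfold lineHeight
  fun_prop

lemma mem_openSegment_iff_lineHeight {p q z : ℝ × ℝ} (h : p.1 < q.1) :
    z ∈ openSegment ℝ p q ↔ p.1 < z.1 ∧ z.1 < q.1 ∧ z.2 = lineHeight p q z.1 := by
  have hpq : q.1 - p.1 ≠ 0 := (sub_pos.mpr h).ne'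
  rw [openSegment_eq_image']
  constructor
  · rintro ⟨t, ⟨ht₀, ht₁⟩, rfl⟩
    simp only [Prod.fst_add, Prod.snd_add, Prod.smul_fst, Prod.smul_snd, Prod.fst_sub,
      Prod.snd_sub, smul_eq_mul, lineHeight]
    refine ⟨by nlinarith, by nlinarith, ?_⟩
    field_simp
    ring
  · rintro ⟨hpz, hzq, hz⟩
    refine ⟨(z.1 - p.1) / (q.1 - p.1), ⟨div_pos (sub_pos.mpr hpz) (sub_pos.mpr h),
      (div_lt_one (sub_pos.mpr h)).mpr (by linarith)⟩, ?_⟩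
    ext
    · simp [hpq]
    · simp only [hz, lineHeight, Prod.snd_add, Prod.smul_snd, Prod.snd_sub, smul_eq_mul]
      ring

lemma not_disjoint_openSegment_of_lineHeight {p q p' q' : ℝ × ℝ} {x y : ℝ} (hxy : x < y)
    (hp : p.1 ≤ x) (hq : y ≤ q.1) (hp' : p'.1 ≤ x) (hq' : y ≤ q'.1)
    (hx : lineHeight p q x < lineHeight p' q' x) (hy : lineHeight p' q' y < lineHeight p q y) :
    ¬ Disjoint (openSegment ℝ p q) (openSegment ℝ p' q') := by
  obtain ⟨z, ⟨hxz, hzy⟩, hz⟩ := intermediate_value_Ioo hxy.le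
    ((continuous_lineHeight p q).sub (continuous_lineHeight p' q')).continuousOn
    (show (0 : ℝ) ∈ Set.Ioo _ _ from ⟨sub_neg.mpr hx, sub_pos.mpr hy⟩)
  refine Set.not_disjoint_iff.mpr ⟨(z, lineHeight p q z), ?_, ?_⟩
  · exact (mem_openSegment_iff_lineHeight (by linarith)).mpr
      ⟨hp.trans_lt hxz, hzy.trans_le hq, rfl⟩
  · exact (mem_openSegment_iff_lineHeight (by linarith)).mpr
      ⟨hp'.trans_lt hxz, hzy.trans_le hq', sub_eq_zero.mp hz⟩

/-- `P` draws `G` in the plane with straight edges, no crossings, no vertex inside an edge, and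
vertices at distinct abscissae. -/
structure IsPlaneDrawing {ι : Type*} (G : SimpleGraph ι) (P : ι → ℝ × ℝ) : Prop where
  injective_fst : Function.Injective fun i => (P i).1
  notMem_openSegment : ∀ a b i, G.Adj a b → P i ∉ openSegment ℝ (P a) (P b)
  disjoint_openSegment : ∀ a b c d, G.Adj a b → G.Adj c d → s(a, b) ≠ s(c, d) →
    Disjoint (openSegment ℝ (P a) (P b)) (openSegment ℝ (P c) (P d))

/-- The vertex `i` of the drawing `P` of `G` is visible from above: no edge meets the open vertical
ray starting at `P i`. -/
def IsVisibleFromAbove {ι : Type*} (G : SimpleGraph ι) (P : ι → ℝ × ℝ) (i : ι) : Prop :=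
  ∀ a b, G.Adj a b → ∀ y, (P i).2 < y → ((P i).1, y) ∉ openSegment ℝ (P a) (P b)

/-- `b` is the right neighbour of the visible vertex `v` whose edge to `v` is steepest. -/
structure IsTopRightEdge {ι : Type*} (G : SimpleGraph ι) (P : ι → ℝ × ℝ) (v b : ι) : Prop where
  isVisibleFromAbove : IsVisibleFromAbove G P v
  adj : G.Adj v b
  fst_lt : (P v).1 < (P b).1
  lineHeight_le : ∀ c, G.Adj v c → (P v).1 < (P c).1 → ∀ x, (P v).1 ≤ x →
    lineHeight (P v) (P c) x ≤ lineHeight (P v) (P b) x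

lemma IsVisibleFromAbove.exists_isTopRightEdge {ι : Type*} [Finite ι] {G : SimpleGraph ι}
    {P : ι → ℝ × ℝ} {v c : ι} (hv : IsVisibleFromAbove G P v) (hvc : G.Adj v c)
    (hlt : (P v).1 < (P c).1) : ∃ b, IsTopRightEdge G P v b := by
  obtain ⟨b, ⟨hvb, hb⟩, hmax⟩ := Set.exists_max_image {b | G.Adj v b ∧ (P v).1 < (P b).1}
    (fun b => ((P b).2 - (P v).2) / ((P b).1 - (P v).1)) (Set.toFinite _) ⟨c, hvc, hlt⟩
  refine ⟨b, hv, hvb, hb, fun d hvd hd x hx => ?_⟩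
  have hslope := hmax d ⟨hvd, hd⟩
  exact add_le_add_right (mul_le_mul_of_nonneg_right hslope (sub_nonneg.mpr hx)) _

namespace IsPlaneDrawing

variable {ι : Type*} {G : SimpleGraph ι} {P : ι → ℝ × ℝ}

lemma isVisibleFromAbove_iff (h : IsPlaneDrawing G P) {i : ι} : IsVisibleFromAbove G P i ↔
    ∀ a b, G.Adj a b → (P a).1 < (P i).1 → (P i).1 < (P b).1 →
      lineHeight (P a) (P b) (P i).1 < (P i).2 := by
  constructor
  · intro hi a b hab hai hib
    have hmem : ((P i).1, lineHeight (P a) (P b) (P i).1) ∈ openSegment ℝ (P a) (P b) :=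
      (mem_openSegment_iff_lineHeight (hai.trans hib)).mpr ⟨hai, hib, rfl⟩
    by_contra! hle
    obtain heq | hlt := hle.eq_or_lt
    · exact h.notMem_openSegment a b i hab (by rwa [← heq] at hmem)
    · exact hi a b hab _ hlt hmem
  · intro hi
    have hbelow : ∀ a b, G.Adj a b → (P a).1 < (P b).1 → ∀ y, (P i).2 < y →
        ((P i).1, y) ∉ openSegment ℝ (P a) (P b) := fun a b hab hlt y hy hmem => by
      obtain ⟨hai, hib, hy'⟩ := (mem_openSegment_iff_lineHeight hlt).mp hmem
      exact (hi a b hab hai hib).not_gt (hy.trans_eq hy')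
    intro a b hab
    obtain hlt | hlt := (h.injective_fst.ne hab.ne).lt_or_gt
    · exact hbelow a b hab hlt
    · rw [openSegment_symm]
      exact hbelow b a hab.symm hlt

lemma lineHeight_le_of_lineHeight_le (h : IsPlaneDrawing G P) {a b c d : ι} (hab : G.Adj a b)
    (hcd : G.Adj c d) (hne : s(a, b) ≠ s(c, d)) {x y : ℝ} (hxy : x < y) (ha : (P a).1 ≤ x)
    (hb : y ≤ (P b).1) (hc : (P c).1 ≤ x) (hd : y ≤ (P d).1)
    (hx : lineHeight (P a) (P b) x < lineHeight (P c) (P d) x) :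
    lineHeight (P a) (P b) y ≤ lineHeight (P c) (P d) y := by
  by_contra! hy
  exact not_disjoint_openSegment_of_lineHeight hxy ha hb hc hd hx hy
    (h.disjoint_openSegment a b c d hab hcd hne)

lemma left_endpoint_above (h : IsPlaneDrawing G P) {v b u w : ι} (hvb : IsTopRightEdge G P v b)
    (huw : G.Adj u w) {x : ℝ} (hvx : (P v).1 < x) (hxb : x ≤ (P b).1) (hux : (P u).1 < x)
    (hxw : x ≤ (P w).1) (habove : lineHeight (P v) (P b) x < lineHeight (P u) (P w) x) :
    (P v).1 < (P u).1 ∧ lineHeight (P v) (P b) (P u).1 < (P u).2 := by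
  have huv : u ≠ v := by
    rintro rfl
    exact (hvb.lineHeight_le w huw (hux.trans_le hxw) x hvx.le).not_gt habove
  have hne : s(u, w) ≠ s(v, b) := fun heq => by
    obtain ⟨rfl, -⟩ | ⟨rfl, rfl⟩ := Sym2.eq_iff.mp heq
    · exact huv rfl
    · exact absurd hvx (hxw.not_gt)
  have hleft : (P v).1 < (P u).1 := by
    by_contra! hle
    have hlt : (P u).1 < (P v).1 := hle.lt_of_ne (h.injective_fst.ne huv)
    have hbelow : lineHeight (P u) (P w) (P v).1 < lineHeight (P v) (P b) (P v).1 := by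
      rw [lineHeight_left]
      exact h.isVisibleFromAbove_iff.mp hvb.isVisibleFromAbove u w huw hlt (hvx.trans_le hxw)
    exact (h.lineHeight_le_of_lineHeight_le huw hvb.adj hne hvx hle hxw le_rfl hxb hbelow).not_gt
      habove
  refine ⟨hleft, ?_⟩
  by_contra! hle
  have hbelow : (P u).2 < lineHeight (P v) (P b) (P u).1 := hle.lt_of_ne fun heq =>
    h.notMem_openSegment v b u hvb.adj
      ((mem_openSegment_iff_lineHeight hvb.fst_lt).mpr ⟨hleft, hux.trans_le hxb, heq⟩)
  rw [← lineHeight_left (P u) (P w)] at hbelow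
  exact (h.lineHeight_le_of_lineHeight_le huw hvb.adj hne hux le_rfl hxw hleft.le hxb hbelow).not_gt
    habove

lemma exists_isTopRightEdge_of_above [Finite ι] (h : IsPlaneDrawing G P)
    (hG : ∀ i, ∃ j, G.Adj i j) {v b u : ι} (hvb : IsTopRightEdge G P v b)
    (hvu : (P v).1 < (P u).1) (hub : (P u).1 < (P b).1)
    (habove : lineHeight (P v) (P b) (P u).1 < (P u).2) :
    ∃ w c, (P v).1 < (P w).1 ∧ IsTopRightEdge G P w c := by
  obtain ⟨w, ⟨hvw, hwb, hw⟩, hmin⟩ := Set.exists_min_image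
    {w | (P v).1 < (P w).1 ∧ (P w).1 < (P b).1 ∧ lineHeight (P v) (P b) (P w).1 < (P w).2}
    (fun w => (P w).1) (Set.toFinite _) ⟨u, hvu, hub, habove⟩
  have hleftmost : ∀ a c, G.Adj a c → (P a).1 < (P w).1 → (P w).1 ≤ (P c).1 →
      lineHeight (P a) (P c) (P w).1 ≤ lineHeight (P v) (P b) (P w).1 := by
    intro a c hac haw hwc
    by_contra! hlt
    obtain ⟨hva, ha⟩ := h.left_endpoint_above hvb hac hvw hwb.le haw hwc hlt
    exact haw.not_ge (hmin a ⟨hva, haw.trans hwb, ha⟩)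
  have hvis : IsVisibleFromAbove G P w := h.isVisibleFromAbove_iff.mpr fun a c hac haw hwc =>
    (hleftmost a c hac haw hwc.le).trans_lt hw
  obtain ⟨c, hwc⟩ := hG w
  have hright : (P w).1 < (P c).1 := by
    by_contra! hle
    have hlt : (P c).1 < (P w).1 := hle.lt_of_ne (h.injective_fst.ne hwc.ne')
    have := hleftmost c w hwc.symm hlt le_rfl
    rw [lineHeight_right hlt] at this
    exact this.not_gt hw
  obtain ⟨d, hd⟩ := hvis.exists_isTopRightEdge hwc hright
  exact ⟨w, d, hvw, hd⟩

/-- Take the rightmost visible vertex having a right neighbour: an edge above the far end of its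
steepest right edge would produce a visible vertex with a right neighbour further right. -/
theorem exists_adj_isVisibleFromAbove [Finite ι] [Nonempty ι] (h : IsPlaneDrawing G P)
    (hG : ∀ i, ∃ j, G.Adj i j) :
    ∃ i j, G.Adj i j ∧ IsVisibleFromAbove G P i ∧ IsVisibleFromAbove G P j := by
  have hstart : {i | ∃ j, IsTopRightEdge G P i j}.Nonempty := by
    obtain ⟨i, -, hmin⟩ := Set.exists_min_image Set.univ (fun i => (P i).1) (Set.toFinite _)
      Set.univ_nonempty
    obtain ⟨j, hij⟩ := hG i
    have hvis : IsVisibleFromAbove G P i := h.isVisibleFromAbove_iff.mpr fun a _ _ hai =>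
      absurd hai (hmin a trivial).not_gt
    exact ⟨i, hvis.exists_isTopRightEdge hij
      ((hmin j trivial).lt_of_ne (h.injective_fst.ne hij.ne))⟩
  obtain ⟨v, ⟨b, hvb⟩, hmax⟩ :=
    Set.exists_max_image _ (fun i => (P i).1) (Set.toFinite _) hstart
  refine ⟨v, b, hvb.adj, hvb.isVisibleFromAbove, h.isVisibleFromAbove_iff.mpr ?_⟩
  intro a c hac hab hbc
  by_contra! hle
  have hlt : lineHeight (P v) (P b) (P b).1 < lineHeight (P a) (P c) (P b).1 := by
    rw [lineHeight_right hvb.fst_lt]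
    exact hle.lt_of_ne fun heq => h.notMem_openSegment a c b hac
      ((mem_openSegment_iff_lineHeight (hab.trans hbc)).mpr ⟨hab, hbc, heq⟩)
  obtain ⟨hva, ha⟩ := h.left_endpoint_above hvb hac hvb.fst_lt le_rfl hab hbc.le hlt
  obtain ⟨w, d, hvw, hwd⟩ := h.exists_isTopRightEdge_of_above hG hvb hva hab ha
  exact hvw.not_ge (hmax w ⟨d, hwd⟩)

end IsPlaneDrawing

/-! ### The view from a point -/

section Perspective

variable {E : Type*} [AddCommGroup E] [Module ℝ E]

/-- The projective map sending `q` to vertical infinity and the half-space `F v < F q` to the upper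
half-plane; it turns segments into segments and sight lines from `q` into vertical rays. -/
def perspective (F G : E →ₗ[ℝ] ℝ) (q v : E) : ℝ × ℝ := (G (q - v) / F (q - v), (F (q - v))⁻¹)

variable {F G : E →ₗ[ℝ] ℝ} {q a b : E}

lemma sub_combo (q a b : E) {s t : ℝ} (h : s + t = 1) :
    q - (s • a + t • b) = s • (q - a) + t • (q - b) := by
  nth_rw 1 [← Convex.combo_self h q]
  module

lemma perspective_combo (ha : F a < F q) (hb : F b < F q) {s t : ℝ} (hst : s + t = 1) :
    perspective F G q (s • a + t • b) =
      (s * F (q - a) / (s * F (q - a) + t * F (q - b))) • perspective F G q a +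
        (t * F (q - b) / (s * F (q - a) + t * F (q - b))) • perspective F G q b := by
  have ha' : F (q - a) ≠ 0 := by simpa using (sub_pos.mpr ha).ne'
  have hb' : F (q - b) ≠ 0 := by simpa using (sub_pos.mpr hb).ne'
  ext <;> simp only [perspective, sub_combo q a b hst, map_add, map_smul, smul_eq_mul,
    Prod.smul_mk, Prod.mk_add_mk]
  · field_simp
  · field_simp
    rw [hst]

lemma image_perspective_openSegment (ha : F a < F q) (hb : F b < F q) :
    perspective F G q '' openSegment ℝ a b =
      openSegment ℝ (perspective F G q a) (perspective F G q b) := by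
  have ha' : 0 < F (q - a) := by simpa using ha
  have hb' : 0 < F (q - b) := by simpa using hb
  apply Set.Subset.antisymm
  · rintro _ ⟨_, ⟨s, t, hs, ht, hst, rfl⟩, rfl⟩
    rw [perspective_combo ha hb hst]
    exact ⟨_, _, by positivity, by positivity, by field_simp, rfl⟩
  · rintro _ ⟨s, t, hs, ht, hst, rfl⟩
    obtain ⟨u, hu, rfl⟩ : ∃ u > 0, u * F (q - a) = s :=
      ⟨s / F (q - a), div_pos hs ha', div_mul_cancel₀ s ha'.ne'⟩
    obtain ⟨w, hw, rfl⟩ : ∃ w > 0, w * F (q - b) = t :=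
      ⟨t / F (q - b), div_pos ht hb', div_mul_cancel₀ t hb'.ne'⟩
    have huw : u / (u + w) + w / (u + w) = 1 := by field_simp
    refine ⟨_, ⟨u / (u + w), w / (u + w), by positivity, by positivity, huw, rfl⟩, ?_⟩
    have hF : u / (u + w) * F (q - a) + w / (u + w) * F (q - b) = 1 / (u + w) := by
      rw [div_mul_eq_mul_div, div_mul_eq_mul_div, ← add_div, hst]
    rw [perspective_combo ha hb huw, hF]
    congr 2 <;> field_simp

lemma exists_perspective_eq_of_mem_openSegment (ha : F a < F q) {z : E}
    (hz : z ∈ openSegment ℝ q a) :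
    ∃ y, (perspective F G q a).2 < y ∧ perspective F G q z = ((perspective F G q a).1, y) := by
  have ha' : 0 < F (q - a) := by simpa using ha
  obtain ⟨s, t, hs, ht, hst, rfl⟩ := hz
  refine ⟨(t * F (q - a))⁻¹, ?_, ?_⟩
  · exact inv_strictAnti₀ (by positivity) (mul_lt_of_lt_one_left ha' (by linarith))
  · simp only [perspective, sub_combo q q a hst, sub_self, smul_zero, zero_add, map_smul,
      smul_eq_mul, mul_div_mul_left _ _ ht.ne']

lemma collinear_of_perspective_fst_eq (hFG : ∀ d, F d = 0 → G d = 0 → d = 0) (ha : F a < F q)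
    (hb : F b < F q) (h : (perspective F G q a).1 = (perspective F G q b).1) :
    Collinear ℝ {q, a, b} := by
  have ha' : F (q - a) ≠ 0 := by simpa using (sub_pos.mpr ha).ne'
  have hb' : F (q - b) ≠ 0 := by simpa using (sub_pos.mpr hb).ne'
  set r := F (q - b) / F (q - a) with hr
  have hzero : (q - b) - r • (q - a) = 0 := by
    apply hFG
    · rw [map_sub, map_smul, smul_eq_mul, hr, div_mul_cancel₀ _ ha', sub_self]
    · rw [perspective, perspective, div_eq_div_iff ha' hb'] at h
      rw [map_sub, map_smul, smul_eq_mul, hr, div_mul_eq_mul_div, sub_eq_zero, eq_div_iff ha']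
      linarith
  have hb : b = AffineMap.lineMap q a r := by
    rw [AffineMap.lineMap_apply_module', ← neg_sub q a, smul_neg, ← sub_eq_zero.mp hzero]
    abel
  rw [Set.pair_comm, Set.insert_comm, hb]
  exact collinear_insert_of_mem_affineSpan_pair (AffineMap.lineMap_mem_affineSpan_pair r q a)

lemma injOn_perspective (hFG : ∀ d, F d = 0 → G d = 0 → d = 0) :
    Set.InjOn (perspective F G q) {v | F v < F q} := by
  intro v _ w hw h
  obtain ⟨h₁, h₂⟩ := Prod.ext_iff.mp h
  have hF : F (q - v) = F (q - w) := inv_injective h₂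
  have hw' : F (q - w) ≠ 0 := by simpa using (sub_pos.mpr hw).ne'
  have hG : G (q - v) = G (q - w) := by
    rwa [perspective, perspective, hF, div_left_inj' hw'] at h₁
  refine (sub_right_injective (sub_eq_zero.mp (hFG ((q - v) - (q - w)) ?_ ?_)))
  · rw [map_sub, hF, sub_self]
  · rw [map_sub, hG, sub_self]

end Perspective

lemma exists_complementary_functional {F : Pt →ₗ[ℝ] ℝ} (hF : F ≠ 0) :
    ∃ G : Pt →ₗ[ℝ] ℝ, ∀ d, F d = 0 → G d = 0 → d = 0 := by
  set e := EuclideanSpace.basisFun (Fin 2) ℝ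
  have hFe : ∀ d, F d = d 0 * F (e 0) + d 1 * F (e 1) := fun d => by
    conv_lhs => rw [← e.sum_repr d]
    simp [e]
  have hne : 0 < F (e 0) ^ 2 + F (e 1) ^ 2 := by
    by_contra! hle
    have h₀ : F (e 0) = 0 := by nlinarith
    have h₁ : F (e 1) = 0 := by nlinarith
    exact hF (LinearMap.ext fun d => by rw [hFe, h₀, h₁]; simp)
  refine ⟨F (e 0) • (EuclideanSpace.proj 1).toLinearMap -
    F (e 1) • (EuclideanSpace.proj 0).toLinearMap, fun d hFd hGd => ?_⟩
  rw [hFe] at hFd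
  have hGd' : F (e 0) * d 1 - F (e 1) * d 0 = 0 := by simpa using hGd
  have hd : ∀ i, (F (e 0) ^ 2 + F (e 1) ^ 2) * d i = 0 := Fin.forall_fin_two.mpr
    ⟨by linear_combination F (e 0) * hFd - F (e 1) * hGd',
      by linear_combination F (e 1) * hFd + F (e 0) * hGd'⟩
  ext i
  exact (mul_eq_zero.mp (hd i)).resolve_left hne.ne'

/-! ### Plane spanning sets of bichromatic edges -/

lemma GenPos.mono {A B : Finset Pt} (hB : GenPos B) (h : A ⊆ B) : GenPos A :=
  fun p hp q hq r hr => hB p (h hp) q (h hq) r (h hr)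

lemma GenPos.notMem_segment {A : Finset Pt} (hA : GenPos A) {a b c : Pt} (ha : a ∈ A) (hb : b ∈ A)
    (hc : c ∈ A) (hca : c ≠ a) (hcb : c ≠ b) : c ∉ segment ℝ a b := by
  intro hmem
  obtain rfl | hab := eq_or_ne a b
  · exact hca (by simpa using hmem)
  · exact hA a ha c hc b hb hca.symm hab hcb (mem_segment_iff_wbtw.mp hmem).collinear

/-- The segment spanned by an unordered pair of points, without its endpoints. -/
def edgeInterior : Sym2 Pt → Set Pt := Sym2.lift ⟨openSegment ℝ, openSegment_symm ℝ⟩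

/-- The length of the segment spanned by an unordered pair of points. -/
def edgeLength : Sym2 Pt → ℝ := Sym2.lift ⟨fun u v => dist u v, fun _ _ => dist_comm _ _⟩

/-- The total length of a finite set of edges. -/
def totalLength (E : Finset (Sym2 Pt)) : ℝ := ∑ e ∈ E, edgeLength e

lemma edgeInterior_subset {C : Set Pt} (hC : Convex ℝ C) {u v : Pt} (hu : u ∈ C) (hv : v ∈ C) :
    edgeInterior s(u, v) ⊆ C := hC.openSegment_subset hu hv

lemma edgeLength_nonneg (e : Sym2 Pt) : 0 ≤ edgeLength e := by
  induction e with
  | _ u v => exact dist_nonneg (x := u) (y := v)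

lemma totalLength_union_le (E F : Finset (Sym2 Pt)) :
    totalLength (E ∪ F) ≤ totalLength E + totalLength F := by
  rw [totalLength, totalLength, totalLength, ← Finset.sum_union_inter]
  exact le_add_of_nonneg_right (Finset.sum_nonneg fun e _ => edgeLength_nonneg e)

lemma totalLength_insert_le (u v : Pt) (E : Finset (Sym2 Pt)) :
    totalLength (insert s(u, v) E) ≤ dist u v + totalLength E := by
  have hsingleton : totalLength {s(u, v)} = dist u v := Finset.sum_singleton ..
  rw [Finset.insert_eq, ← hsingleton]
  exact totalLength_union_le ..

/-- `E` is the edge set of a plane connected graph on the vertex set `A` all of whose edges have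
differently coloured endpoints. -/
structure PlaneSpanning {κ : Type*} (col : Pt → κ) (A : Finset Pt) (E : Finset (Sym2 Pt)) :
    Prop where
  mem : ∀ {u v}, s(u, v) ∈ E → u ∈ A
  color_ne : ∀ {u v}, s(u, v) ∈ E → col u ≠ col v
  pairwiseDisjoint : (E : Set (Sym2 Pt)).PairwiseDisjoint edgeInterior
  reachable : ∀ u ∈ A, ∀ v ∈ A, (SimpleGraph.fromEdgeSet (E : Set (Sym2 Pt))).Reachable u v

namespace PlaneSpanning

variable {κ : Type*} {col : Pt → κ} {A B : Finset Pt} {E F : Finset (Sym2 Pt)} {p q : Pt} {D : ℝ}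

lemma mem_right (hE : PlaneSpanning col A E) {u v : Pt} (h : s(u, v) ∈ E) : v ∈ A :=
  hE.mem (Sym2.eq_swap ▸ h)

lemma adj_iff (hE : PlaneSpanning col A E) {u v : Pt} :
    (SimpleGraph.fromEdgeSet (E : Set (Sym2 Pt))).Adj u v ↔ s(u, v) ∈ E := by
  rw [SimpleGraph.fromEdgeSet_adj]
  exact and_iff_left_of_imp fun h huv => hE.color_ne h (congrArg col huv)

lemma exists_edge (hE : PlaneSpanning col A E) (hA : (col '' A).Nontrivial) (hp : p ∈ A) :
    ∃ v, s(p, v) ∈ E := by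
  obtain ⟨_, ⟨w, hw, rfl⟩, hne⟩ := hA.exists_ne (col p)
  obtain ⟨walk⟩ := hE.reachable p hp w hw
  cases walk with
  | nil => exact absurd rfl hne
  | cons hadj _ => exact ⟨_, hE.adj_iff.mp hadj⟩

lemma singleton (col : Pt → κ) (q : Pt) : PlaneSpanning col {q} ∅ where
  mem := by simp
  color_ne := by simp
  pairwiseDisjoint := by simp
  reachable u hu v hv := by
    rw [Finset.mem_singleton.mp hu, Finset.mem_singleton.mp hv]

lemma join (hE : PlaneSpanning col A E) (hF : PlaneSpanning col B F) (hp : p ∈ A) (hq : q ∈ B)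
    (hpq : col p ≠ col q) (hEF : ∀ e ∈ E, ∀ f ∈ F, Disjoint (edgeInterior e) (edgeInterior f))
    (hpE : ∀ e ∈ E, Disjoint (openSegment ℝ q p) (edgeInterior e))
    (hqF : ∀ f ∈ F, Disjoint (openSegment ℝ q p) (edgeInterior f)) :
    PlaneSpanning col (A ∪ B) (insert s(q, p) (E ∪ F)) where
  mem := by
    intro u v huv
    rw [Finset.mem_union]
    simp only [Finset.mem_insert, Finset.mem_union, Sym2.eq_iff] at huv
    obtain (⟨rfl, -⟩ | ⟨rfl, -⟩) | huv | huv := huv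
    exacts [.inr hq, .inl hp, .inl (hE.mem huv), .inr (hF.mem huv)]
  color_ne := by
    intro u v huv
    simp only [Finset.mem_insert, Finset.mem_union, Sym2.eq_iff] at huv
    obtain (⟨rfl, rfl⟩ | ⟨rfl, rfl⟩) | huv | huv := huv
    exacts [hpq.symm, hpq, hE.color_ne huv, hF.color_ne huv]
  pairwiseDisjoint := by
    rw [Finset.coe_insert, Finset.coe_union]
    refine (Set.pairwiseDisjoint_union.mpr ⟨hE.pairwiseDisjoint, hF.pairwiseDisjoint,
      fun e he f hf _ => hEF e he f hf⟩).insert fun e he _ => ?_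
    exact he.elim (hpE e) (hqF e)
  reachable := by
    have hEle : SimpleGraph.fromEdgeSet (E : Set (Sym2 Pt)) ≤
        SimpleGraph.fromEdgeSet ↑(insert s(q, p) (E ∪ F)) :=
      SimpleGraph.fromEdgeSet_mono (by grind)
    have hFle : SimpleGraph.fromEdgeSet (F : Set (Sym2 Pt)) ≤
        SimpleGraph.fromEdgeSet ↑(insert s(q, p) (E ∪ F)) :=
      SimpleGraph.fromEdgeSet_mono (by grind)
    have hqp : (SimpleGraph.fromEdgeSet (↑(insert s(q, p) (E ∪ F)) : Set (Sym2 Pt))).Adj q p :=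
      (SimpleGraph.fromEdgeSet_adj _).mpr ⟨by simp, fun h => hpq (h ▸ rfl)⟩
    have hto : ∀ u ∈ A ∪ B, (SimpleGraph.fromEdgeSet
        (↑(insert s(q, p) (E ∪ F)) : Set (Sym2 Pt))).Reachable u p := fun u hu =>
      (Finset.mem_union.mp hu).elim (fun hu => (hE.reachable u hu p hp).mono hEle)
        fun hu => ((hF.reachable u hu q hq).mono hFle).trans hqp.reachable
    exact fun u hu v hv => (hto u hu).trans (hto v hv).symm

section Visibility

variable {G H : Pt →ₗ[ℝ] ℝ}

lemma isPlaneDrawing_perspective (hE : PlaneSpanning col A E) (hH : ∀ d, G d = 0 → H d = 0 → d = 0)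
    (hq : ∀ a ∈ A, G a < G q) (hgen : GenPos (insert q A)) :
    IsPlaneDrawing ((SimpleGraph.fromEdgeSet (E : Set (Sym2 Pt))).comap ((↑) : A → Pt))
      (fun a => perspective G H q a) where
  injective_fst a b hab := by
    by_contra hne
    have hqa : q ≠ a := fun h => (hq a a.2).ne (h ▸ rfl)
    have hqb : q ≠ b := fun h => (hq b b.2).ne (h ▸ rfl)
    exact hgen q (by simp) a (by simp) b (by simp) hqa hqb (Subtype.coe_ne_coe.mpr hne)
      (collinear_of_perspective_fst_eq hH (hq a a.2) (hq b b.2) hab)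
  notMem_openSegment a b c hab hc := by
    rw [← image_perspective_openSegment (hq a a.2) (hq b b.2)] at hc
    obtain ⟨z, hz, hzc⟩ := hc
    have hGz : G z < G q := (convex_halfSpace_lt G.isLinear _).openSegment_subset
      (hq a a.2) (hq b b.2) hz
    rw [injOn_perspective hH hGz (hq c c.2) hzc] at hz
    have hne : (a : Pt) ≠ b := Subtype.coe_ne_coe.mpr hab.ne
    refine hgen.notMem_segment (by simp : (a : Pt) ∈ insert q A) (by simp) (by simp) ?_ ?_
      (openSegment_subset_segment _ _ _ hz)
    · exact fun h => hne (left_mem_openSegment_iff.mp (h ▸ hz))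
    · exact fun h => hne (right_mem_openSegment_iff.mp (h ▸ hz))
  disjoint_openSegment a b c d hab hcd hne := by
    rw [← image_perspective_openSegment (hq a a.2) (hq b b.2),
      ← image_perspective_openSegment (hq c c.2) (hq d d.2), Set.disjoint_iff_inter_eq_empty,
      ← (injOn_perspective hH).image_inter, Set.image_eq_empty, ← Set.disjoint_iff_inter_eq_empty]
    · refine hE.pairwiseDisjoint (hE.adj_iff.mp hab) (hE.adj_iff.mp hcd) fun h => hne ?_
      exact Sym2.map.injective Subtype.val_injective h
    · exact (convex_halfSpace_lt G.isLinear _).openSegment_subset (hq a a.2) (hq b b.2)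
    · exact (convex_halfSpace_lt G.isLinear _).openSegment_subset (hq c c.2) (hq d d.2)

theorem exists_visible (hE : PlaneSpanning col A E) (hA : (col '' A).Nontrivial)
    (hq : ∀ a ∈ A, G a < G q) (hgen : GenPos (insert q A)) (c : κ) :
    ∃ p ∈ A, col p ≠ c ∧ ∀ e ∈ E, Disjoint (openSegment ℝ q p) (edgeInterior e) := by
  obtain ⟨a₀, ha₀⟩ : A.Nonempty := by simpa using hA.nonempty
  obtain ⟨H, hH⟩ := exists_complementary_functional (F := G) fun h => by simpa [h] using hq a₀ ha₀
  have hdraw := hE.isPlaneDrawing_perspective hH hq hgen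
  have hnbr : ∀ a : A, ∃ b : A,
      ((SimpleGraph.fromEdgeSet (E : Set (Sym2 Pt))).comap ((↑) : A → Pt)).Adj a b := fun a => by
    obtain ⟨v, hv⟩ := hE.exists_edge hA a.2
    exact ⟨⟨v, hE.mem_right hv⟩, hE.adj_iff.mpr hv⟩
  have : Nonempty A := ⟨⟨a₀, ha₀⟩⟩
  obtain ⟨i, j, hij, hi, hj⟩ := hdraw.exists_adj_isVisibleFromAbove hnbr
  have hcol : col i ≠ col j := hE.color_ne (hE.adj_iff.mp hij)
  obtain ⟨p, hpc, hp⟩ : ∃ p : A, col p ≠ c ∧ IsVisibleFromAbove _ _ p := by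
    by_cases hic : col i = c
    · exact ⟨j, hic ▸ hcol.symm, hj⟩
    · exact ⟨i, hic, hi⟩
  refine ⟨p, p.2, hpc, fun e he => ?_⟩
  induction e with
  | _ u v =>
    have hu := hE.mem he
    have hv := hE.mem_right he
    refine Set.disjoint_left.mpr fun z hz hzuv => ?_
    obtain ⟨y, hy, hzy⟩ := exists_perspective_eq_of_mem_openSegment (G := H) (hq p p.2) hz
    refine hp ⟨u, hu⟩ ⟨v, hv⟩ (hE.adj_iff.mpr he) y hy ?_
    rw [← hzy, ← image_perspective_openSegment (hq u hu) (hq v hv)]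
    exact Set.mem_image_of_mem _ hzuv

end Visibility

lemma exists_union (hE : PlaneSpanning col A E) (hF : PlaneSpanning col B F)
    (hA : (col '' A).Nontrivial) (hB : B.Nonempty) (hgen : GenPos (A ∪ B)) {G : Pt →ₗ[ℝ] ℝ}
    (hAB : ∀ a ∈ A, ∀ b ∈ B, G a < G b) (hD : ∀ a ∈ A, ∀ b ∈ B, dist b a ≤ D) :
    ∃ E', PlaneSpanning col (A ∪ B) E' ∧ totalLength E' ≤ totalLength E + totalLength F + D := by
  obtain ⟨q, hq, hmin⟩ := B.exists_min_image G hB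
  obtain ⟨p, hp, hpq, hvis⟩ := hE.exists_visible hA (fun a ha => hAB a ha q hq)
    (hgen.mono (Finset.insert_subset (Finset.mem_union_right _ hq) Finset.subset_union_left))
    (col q)
  have hElow : ∀ e ∈ E, edgeInterior e ⊆ {v | G v < G q} := by
    rintro ⟨u, v⟩ he
    exact edgeInterior_subset (convex_halfSpace_lt G.isLinear _) (hAB u (hE.mem he) q hq)
      (hAB v (hE.mem_right he) q hq)
  have hFhigh : ∀ f ∈ F, edgeInterior f ⊆ {v | G q ≤ G v} := by
    rintro ⟨u, v⟩ hf
    exact edgeInterior_subset (convex_halfSpace_ge G.isLinear _) (hmin u (hF.mem hf))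
      (hmin v (hF.mem_right hf))
  have hqplow : openSegment ℝ q p ⊆ {v | G v < G q} := by
    rintro _ ⟨s, t, -, ht, hst, rfl⟩
    have hG : G (s • q + t • p) = G q - t * (G q - G p) := by
      rw [← eq_sub_iff_add_eq] at hst
      simp only [hst, map_add, map_smul, smul_eq_mul]
      ring
    exact hG.trans_lt (sub_lt_self _ (mul_pos ht (sub_pos.mpr (hAB p hp q hq))))
  have hlow_high : Disjoint {v | G v < G q} {v | G q ≤ G v} :=
    Set.disjoint_left.mpr fun v (hv : G v < G q) => not_le.mpr hv
  refine ⟨_, hE.join hF hp hq hpq (fun e he f hf => hlow_high.mono (hElow e he) (hFhigh f hf)) hvis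
    fun f hf => hlow_high.mono hqplow (hFhigh f hf), ?_⟩
  linarith [totalLength_insert_le q p (E ∪ F), totalLength_union_le E F, hD p hp q hq]

lemma exists_insert (hE : PlaneSpanning col A E) (hA : (col '' A).Nontrivial)
    (hq : q ∉ convexHull ℝ (A : Set Pt)) (hgen : GenPos (insert q A))
    (hD : ∀ a ∈ A, dist q a ≤ D) :
    ∃ E', PlaneSpanning col (insert q A) E' ∧ totalLength E' ≤ totalLength E + D := by
  obtain ⟨G, u, hAu, huq⟩ := geometric_hahn_banach_closed_point (convex_convexHull ℝ (A : Set Pt))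
    (A.finite_toSet.isCompact_convexHull (𝕜 := ℝ)).isClosed hq
  have hAq : ∀ a ∈ A, ∀ b ∈ ({q} : Finset Pt), G a < G b := fun a ha b hb =>
    Finset.mem_singleton.mp hb ▸ (hAu a (subset_convexHull ℝ _ ha)).trans huq
  have hunion : A ∪ {q} = insert q A := by rw [Finset.union_comm, Finset.insert_eq]
  obtain ⟨E', hE', hlen⟩ := hE.exists_union (singleton col q) hA (Finset.singleton_nonempty q)
    (hunion ▸ hgen) (G := G.toLinearMap) hAq (by simpa using hD)
  exact ⟨E', hunion ▸ hE', by simpa [totalLength] using hlen⟩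

end PlaneSpanning

lemma exists_notMem_convexHull_erase {S : Finset Pt} {C : Set Pt} (hC : Convex ℝ C)
    (hSC : ¬ (S : Set Pt) ⊆ C) :
    ∃ q ∈ S, q ∉ C ∧ q ∉ convexHull ℝ ((S.erase q : Finset Pt) : Set Pt) := by
  set K := convexHull ℝ (S : Set Pt)
  have hK : K ⊆ convexHull ℝ (K.extremePoints ℝ) := by
    have hfin : (K.extremePoints ℝ).Finite := S.finite_toSet.subset extremePoints_convexHull_subset
    rw [← (hfin.isCompact_convexHull (𝕜 := ℝ)).isClosed.closure_eq,
      closure_convexHull_extremePoints (S.finite_toSet.isCompact_convexHull (𝕜 := ℝ))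
        (convex_convexHull ℝ _)]
  obtain ⟨q, hqK, hqC⟩ : ∃ q ∈ K.extremePoints ℝ, q ∉ C := by
    by_contra! hsub
    exact hSC ((subset_convexHull ℝ _).trans (hK.trans (convexHull_min hsub hC)))
  refine ⟨q, extremePoints_convexHull_subset hqK, hqC, fun hq => ?_⟩
  have hconv : Convex ℝ (K \ {q}) :=
    ((convex_convexHull ℝ _).mem_extremePoints_iff_convex_sdiff.mp hqK).2
  refine (convexHull_min (fun x hx => ?_) hconv hq).2 rfl
  obtain ⟨hxq, hxS⟩ := Finset.mem_erase.mp hx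
  exact ⟨subset_convexHull ℝ _ hxS, hxq⟩

section Extension

variable {κ : Type*} {col : Pt → κ} {S : Finset Pt} {D : ℝ}

lemma PlaneSpanning.exists_extend {A : Finset Pt} {E : Finset (Sym2 Pt)}
    (hE : PlaneSpanning col A E) (hA : (col '' A).Nontrivial) (hAS : A ⊆ S)
    (hout : ∀ q ∈ S \ A, q ∉ convexHull ℝ (A : Set Pt)) (hgen : GenPos S)
    (hD : ∀ p ∈ S, ∀ q ∈ S, dist p q ≤ D) :
    ∃ E', PlaneSpanning col S E' ∧ totalLength E' ≤ totalLength E + (S \ A).card * D := by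
  induction S using Finset.strongInduction with
  | H S ih =>
    obtain rfl | hne := eq_or_ne A S
    · exact ⟨E, hE, by simp⟩
    obtain ⟨b, hbS, hbA⟩ := Finset.exists_of_ssubset (hAS.ssubset_of_ne hne)
    obtain ⟨q, hqS, hqA, hq⟩ := exists_notMem_convexHull_erase (convex_convexHull ℝ (A : Set Pt))
      fun h => hout b (Finset.mem_sdiff.mpr ⟨hbS, hbA⟩) (h hbS)
    have hqA : q ∉ A := fun h => hqA (subset_convexHull ℝ _ h)
    have hAq : A ⊆ S.erase q := Finset.subset_erase.mpr ⟨hAS, hqA⟩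
    have hsub : S.erase q ⊆ S := S.erase_subset q
    obtain ⟨E₁, hE₁, hlen₁⟩ := ih (S.erase q) (Finset.erase_ssubset hqS) hAq
      (fun p hp => hout p (Finset.sdiff_subset_sdiff hsub le_rfl hp)) (hgen.mono hsub)
      fun p hp p' hp' => hD p (hsub hp) p' (hsub hp')
    obtain ⟨E₂, hE₂, hlen₂⟩ := hE₁.exists_insert (hA.mono (Set.image_mono hAq)) hq
      (by rwa [Finset.insert_erase hqS]) fun p hp => hD q hqS p (hsub hp)
    refine ⟨E₂, Finset.insert_erase hqS ▸ hE₂, hlen₂.trans ?_⟩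
    have hcard : ((S.erase q \ A).card : ℝ) + 1 = (S \ A).card := by
      rw [Finset.erase_sdiff_comm]
      exact_mod_cast Finset.card_erase_add_one (Finset.mem_sdiff.mpr ⟨hqS, hqA⟩)
    linarith [congrArg (· * D) hcard]

/-- A bichromatic pair spans a segment containing no other point, hence extends to everything. -/
theorem exists_planeSpanning (hS : (col '' S).Nontrivial) (hgen : GenPos S)
    (hD : ∀ p ∈ S, ∀ q ∈ S, dist p q ≤ D) :
    ∃ E, PlaneSpanning col S E ∧ totalLength E ≤ S.card * D := by
  obtain ⟨_, ⟨a, ha, rfl⟩, _, ⟨b, hb, rfl⟩, hab⟩ := hS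
  have hpair := (PlaneSpanning.singleton col a).join (PlaneSpanning.singleton col b)
    (Finset.mem_singleton_self a) (Finset.mem_singleton_self b) hab (by simp) (by simp) (by simp)
  have hsub : {a} ∪ {b} ⊆ S :=
    Finset.union_subset (Finset.singleton_subset_iff.mpr ha) (Finset.singleton_subset_iff.mpr hb)
  have hout : ∀ q ∈ S \ ({a} ∪ {b}), q ∉ convexHull ℝ (({a} ∪ {b} : Finset Pt) : Set Pt) := by
    intro q hq
    obtain ⟨hqS, hqa, hqb⟩ : q ∈ S ∧ q ≠ a ∧ q ≠ b := by simpa using hq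
    rw [Finset.coe_union, Finset.coe_singleton, Finset.coe_singleton, Set.singleton_union,
      convexHull_pair]
    exact hgen.notMem_segment ha hb hqS hqa hqb
  obtain ⟨E, hE, hlen⟩ :=
    hpair.exists_extend ⟨col a, by simp, col b, by simp, hab⟩ hsub hout hgen hD
  refine ⟨E, hE, hlen.trans ?_⟩
  have hpairlen : totalLength (insert s(b, a) (∅ ∪ ∅)) ≤ dist b a := by
    simpa [totalLength] using totalLength_insert_le b a ∅
  have hcard : ((S \ ({a} ∪ {b})).card : ℝ) + 1 ≤ S.card := by
    exact_mod_cast Finset.card_lt_card (Finset.sdiff_ssubset hsub ⟨a, by simp⟩)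
  have hD₀ : 0 ≤ D := dist_nonneg.trans (hD b hb a ha)
  linarith [hD b hb a ha, mul_le_mul_of_nonneg_right hcard hD₀]

lemma PlaneSpanning.exists_union_of_lt {A B : Finset Pt} {E : Finset (Sym2 Pt)}
    (hE : PlaneSpanning col A E) (hA : (col '' A).Nontrivial) {G : Pt →ₗ[ℝ] ℝ}
    (hAB : ∀ a ∈ A, ∀ b ∈ B, G a < G b) (hgen : GenPos (A ∪ B))
    (hD : ∀ p ∈ A ∪ B, ∀ q ∈ A ∪ B, dist p q ≤ D) :
    ∃ E', PlaneSpanning col (A ∪ B) E' ∧ totalLength E' ≤ totalLength E + B.card * D := by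
  have hdisj : Disjoint B A :=
    Finset.disjoint_left.mpr fun v hvB hvA => (hAB v hvA v hvB).false
  have hsdiff : (A ∪ B) \ A = B := Finset.union_sdiff_cancel_left hdisj.symm
  have hout : ∀ q ∈ (A ∪ B) \ A, q ∉ convexHull ℝ (A : Set Pt) := fun q hq hqA =>
    lt_irrefl (G q) (convexHull_min (fun a ha => hAB a ha q (hsdiff ▸ hq))
      (convex_halfSpace_lt G.isLinear (G q)) hqA)
  obtain ⟨E', hE', hlen⟩ := hE.exists_extend hA Finset.subset_union_left hout hgen hD
  exact ⟨E', hE', hsdiff ▸ hlen⟩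

theorem exists_planeSpanning_union {A B : Finset Pt} {G : Pt →ₗ[ℝ] ℝ} {a b : ℝ} {m n : ℕ}
    (hAB : ∀ p ∈ A, ∀ q ∈ B, G p < G q) (hgen : GenPos (A ∪ B))
    (hcol : (col '' (A ∪ B : Finset Pt)).Nontrivial)
    (hD : ∀ p ∈ A ∪ B, ∀ q ∈ A ∪ B, dist p q ≤ D) (ha : 0 ≤ a) (hb : 0 ≤ b)
    (hA : (col '' A).Nontrivial → ∃ E, PlaneSpanning col A E ∧ totalLength E ≤ a)
    (hB : (col '' B).Nontrivial → ∃ E, PlaneSpanning col B E ∧ totalLength E ≤ b)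
    (hm : ¬ (col '' A).Nontrivial → A.card ≤ m) (hn : ¬ (col '' B).Nontrivial → B.card ≤ n)
    (hmn : (col '' A).Nontrivial → (col '' B).Nontrivial → 1 ≤ m + n) :
    ∃ E, PlaneSpanning col (A ∪ B) E ∧ totalLength E ≤ a + b + (m + n : ℕ) * D := by
  have hD₀ : 0 ≤ D := by
    obtain ⟨p, hp⟩ : (A ∪ B).Nonempty := by simpa using hcol.nonempty
    exact dist_nonneg.trans (hD p hp p hp)
  have hcost : ∀ k : ℕ, k ≤ m + n → k * D ≤ (m + n : ℕ) * D := fun k hk =>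
    mul_le_mul_of_nonneg_right (Nat.cast_le.mpr hk) hD₀
  by_cases hcA : (col '' A).Nontrivial <;> by_cases hcB : (col '' B).Nontrivial
  · obtain ⟨E, hE, hEa⟩ := hA hcA
    obtain ⟨F, hF, hFb⟩ := hB hcB
    obtain ⟨E', hE', hlen⟩ := hE.exists_union hF hcA (by simpa using hcB.nonempty) hgen hAB
      fun p hp q hq => hD q (Finset.mem_union_right _ hq) p (Finset.mem_union_left _ hp)
    refine ⟨E', hE', ?_⟩
    linarith [Nat.cast_one (R := ℝ) ▸ hcost 1 (hmn hcA hcB)]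
  · obtain ⟨E, hE, hEa⟩ := hA hcA
    obtain ⟨E', hE', hlen⟩ := hE.exists_union_of_lt hcA hAB hgen hD
    exact ⟨E', hE', by linarith [hcost _ ((hn hcB).trans (Nat.le_add_left n m))]⟩
  · obtain ⟨E, hE, hEb⟩ := hB hcB
    obtain ⟨E', hE', hlen⟩ := hE.exists_union_of_lt (B := A) (G := -G) hcB
      (fun q hq p hp => neg_lt_neg (hAB p hp q hq)) (Finset.union_comm A B ▸ hgen)
      (Finset.union_comm A B ▸ hD)
    refine ⟨E', Finset.union_comm B A ▸ hE', ?_⟩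
    linarith [hcost _ ((hm hcA).trans (Nat.le_add_right m n))]
  · obtain ⟨E, hE, hlen⟩ := exists_planeSpanning hcol hgen hD
    exact ⟨E, hE, by
      linarith [hcost _ ((Finset.card_union_le A B).trans (add_le_add (hm hcA) (hn hcB)))]⟩

end Extension

/-! ### Building plane trees along a hierarchy of cells -/

/-- The darts of `G` that start in `A` and join two points with different labels. -/
def cutDarts {ι : Type*} {S : Finset Pt} (G : SimpleGraph S) (label : Pt → ι) (A : Finset Pt) :
    Finset G.Dart :=
  {d | (d.fst : Pt) ∈ A ∧ label d.fst ≠ label d.snd}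

section CutDarts

variable {ι : Type*} {S A B : Finset Pt} {G : SimpleGraph S} {label : Pt → ι}

lemma mem_cutDarts {d : G.Dart} :
    d ∈ cutDarts G label A ↔ (d.fst : Pt) ∈ A ∧ label d.fst ≠ label d.snd := by
  simp [cutDarts]

lemma card_cutDarts_union (h : Disjoint A B) :
    (cutDarts G label (A ∪ B)).card = (cutDarts G label A).card + (cutDarts G label B).card := by
  rw [← Finset.card_union_of_disjoint]
  · congr 1
    ext d
    simp only [mem_cutDarts, Finset.mem_union, or_and_right]
  · exact Finset.disjoint_left.mpr fun d hA hB =>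
      Finset.disjoint_left.mp h (mem_cutDarts.mp hA).1 (mem_cutDarts.mp hB).1

lemma cutDarts_nonempty (hG : G.Preconnected) {c : ι} {v w : S} (hv : label v = c)
    (hw : label w ≠ c) : (cutDarts G label {u ∈ S | label u = c}).Nonempty := by
  obtain ⟨walk⟩ := hG v w
  obtain ⟨d, -, hfst, hsnd⟩ := walk.exists_boundary_dart {u | label u = c} hv hw
  exact ⟨d, mem_cutDarts.mpr
    ⟨Finset.mem_filter.mpr ⟨d.fst.2, hfst⟩, fun h => hsnd (h.symm.trans hfst)⟩⟩

lemma card_le_card_cutDarts [Nontrivial S] (hG : G.Preconnected) {col : Pt → Bool}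
    (hcol : Bichromatic col G) (c : ι)
    (hmono : ¬ (col '' ({v ∈ S | label v = c} : Finset Pt)).Nontrivial) :
    ({v ∈ S | label v = c} : Finset Pt).card ≤ (cutDarts G label {v ∈ S | label v = c}).card := by
  refine Finset.card_le_card_of_surjOn (fun d => (d.fst : Pt)) fun v hv => ?_
  obtain ⟨hvS, hvc⟩ := Finset.mem_filter.mp hv
  obtain ⟨w, hvw⟩ := hG.exists_adj_of_nontrivial ⟨v, hvS⟩
  refine ⟨⟨(⟨v, hvS⟩, w), hvw⟩, mem_cutDarts.mpr ⟨hv, fun h => hmono ?_⟩, rfl⟩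
  have hw : (w : Pt) ∈ ({v ∈ S | label v = c} : Finset Pt) :=
    Finset.mem_filter.mpr ⟨w.2, h.symm.trans hvc⟩
  exact ⟨col v, ⟨v, hv, rfl⟩, col w, ⟨w, hw, rfl⟩, hcol _ _ hvw⟩

end CutDarts

/-- A sequence of partitions of the plane into cells, `cell k v` being the name of the cell of level
`k` that contains `v`. Cells of level `k` have diameter at most `scale k`, and every cell of level
`k + 1` is the union of two cells of level `k` that are separated by a line. -/
structure BinaryHierarchy {ι : Type*} (cell : ℕ → Pt → ι) (scale : ℕ → ℝ) : Prop where
  dist_le : ∀ {k v w}, cell k v = cell k w → dist v w ≤ scale k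
  split : ∀ k c, ∃ c₁ c₂, ∃ f : Pt →ₗ[ℝ] ℝ,
    (∀ v, cell (k + 1) v = c ↔ cell k v = c₁ ∨ cell k v = c₂) ∧
      ∀ v w, cell k v = c₁ → cell k w = c₂ → f v < f w

/-- The length of the plane graph built bottom-up on `A`: the points of `A` are joined at level `0`,
and for each dart of `G` cut at level `k` an edge inside a cell of level `k + 1` is added. -/
def hierarchyCost {ι : Type*} {S : Finset Pt} (G : SimpleGraph S) (cell : ℕ → Pt → ι)
    (scale : ℕ → ℝ) (K : ℕ) (A : Finset Pt) : ℝ :=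
  A.card * scale 0 + ∑ k ∈ Finset.range K, (cutDarts G (cell k) A).card * scale (k + 1)

lemma hierarchyCost_union_succ {ι : Type*} {cell : ℕ → Pt → ι} {scale : ℕ → ℝ} {S A B : Finset Pt}
    {G : SimpleGraph S} (hAB : Disjoint A B) (K : ℕ) :
    hierarchyCost G cell scale (K + 1) (A ∪ B) =
      hierarchyCost G cell scale K A + hierarchyCost G cell scale K B +
        ((cutDarts G (cell K) A).card + (cutDarts G (cell K) B).card : ℕ) * scale (K + 1) := by
  simp only [hierarchyCost, Finset.sum_range_succ, card_cutDarts_union hAB,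
    Finset.card_union_of_disjoint hAB, Nat.cast_add, add_mul, Finset.sum_add_distrib]
  ring

namespace BinaryHierarchy

variable {ι : Type*} {cell : ℕ → Pt → ι} {scale : ℕ → ℝ} {S A : Finset Pt} {G : SimpleGraph S}
  {col : Pt → Bool}

lemma scale_nonneg (h : BinaryHierarchy cell scale) (k : ℕ) : 0 ≤ scale k :=
  dist_nonneg.trans (h.dist_le (v := 0) (w := 0) rfl)

lemma hierarchyCost_nonneg (h : BinaryHierarchy cell scale) (K : ℕ) :
    0 ≤ hierarchyCost G cell scale K A :=
  add_nonneg (mul_nonneg (Nat.cast_nonneg _) (h.scale_nonneg 0))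
    (Finset.sum_nonneg fun k _ => mul_nonneg (Nat.cast_nonneg _) (h.scale_nonneg (k + 1)))

theorem exists_planeSpanning_cell (h : BinaryHierarchy cell scale) (hgen : GenPos S)
    [Nontrivial S] (hG : G.Preconnected) (hcol : Bichromatic col G) (K : ℕ) (c : ι)
    (hc : (col '' ({v ∈ S | cell K v = c} : Finset Pt)).Nontrivial) :
    ∃ E, PlaneSpanning col {v ∈ S | cell K v = c} E ∧
      totalLength E ≤ hierarchyCost G cell scale K {v ∈ S | cell K v = c} := by
  have hgen_cell : ∀ K c, GenPos ({v ∈ S | cell K v = c}) := fun _ _ =>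
    hgen.mono (Finset.filter_subset _ _)
  have hdist : ∀ K c, ∀ p ∈ ({v ∈ S | cell K v = c} : Finset Pt),
      ∀ q ∈ ({v ∈ S | cell K v = c} : Finset Pt), dist p q ≤ scale K := fun K c p hp q hq =>
    h.dist_le ((Finset.mem_filter.mp hp).2.trans (Finset.mem_filter.mp hq).2.symm)
  induction K generalizing c with
  | zero => simpa [hierarchyCost] using exists_planeSpanning hc (hgen_cell 0 c) (hdist 0 c)
  | succ K ih =>
    obtain ⟨c₁, c₂, f, hsplit, hf⟩ := h.split K c
    have hsep : ∀ p ∈ ({v ∈ S | cell K v = c₁} : Finset Pt),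
        ∀ q ∈ ({v ∈ S | cell K v = c₂} : Finset Pt), f p < f q := fun p hp q hq =>
      hf p q (Finset.mem_filter.mp hp).2 (Finset.mem_filter.mp hq).2
    have hunion : ({v ∈ S | cell (K + 1) v = c} : Finset Pt) =
        {v ∈ S | cell K v = c₁} ∪ {v ∈ S | cell K v = c₂} := by
      simp only [hsplit, Finset.filter_or]
    have hdisj : Disjoint ({v ∈ S | cell K v = c₁} : Finset Pt) {v ∈ S | cell K v = c₂} :=
      Finset.disjoint_left.mpr fun v h₁ h₂ => (hsep v h₁ v h₂).false
    have hgen' := hgen_cell (K + 1) c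
    have hdist' := hdist (K + 1) c
    rw [hunion] at hc hgen' hdist' ⊢
    rw [hierarchyCost_union_succ hdisj]
    refine exists_planeSpanning_union hsep hgen' hc hdist' (h.hierarchyCost_nonneg K)
      (h.hierarchyCost_nonneg K) (ih c₁) (ih c₂) (card_le_card_cutDarts hG hcol c₁)
      (card_le_card_cutDarts hG hcol c₂) fun hA hB => ?_
    obtain ⟨v, hv⟩ := hA.nonempty.of_image
    obtain ⟨w, hw⟩ := hB.nonempty.of_image
    have hwc : cell K w ≠ c₁ := fun hwc =>
      (hf w w hwc (Finset.mem_filter.mp hw).2).false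
    have hcut := cutDarts_nonempty hG (v := ⟨v, (Finset.mem_filter.mp hv).1⟩)
      (w := ⟨w, (Finset.mem_filter.mp hw).1⟩) (Finset.mem_filter.mp hv).2 hwc
    exact hcut.card_pos.trans_le (Nat.le_add_right _ _)

theorem exists_planeSpanning (h : BinaryHierarchy cell scale) (hgen : GenPos S) [Nontrivial S]
    (hG : G.Preconnected) (hcol : Bichromatic col G) {K : ℕ} {c : ι} (hc : ∀ v ∈ S, cell K v = c) :
    ∃ E, PlaneSpanning col S E ∧ totalLength E ≤ hierarchyCost G cell scale K S := by
  have hcell : ({v ∈ S | cell K v = c} : Finset Pt) = S := Finset.filter_true_of_mem hc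
  obtain ⟨v⟩ : Nonempty S := inferInstance
  obtain ⟨w, hvw⟩ := hG.exists_adj_of_nontrivial v
  have hS : (col '' S).Nontrivial :=
    ⟨col v, ⟨v, v.2, rfl⟩, col w, ⟨w, w.2, rfl⟩, hcol v w hvw⟩
  have hmain := h.exists_planeSpanning_cell hgen hG hcol K c
  rw [hcell] at hmain
  exact hmain hS

end BinaryHierarchy

/-! ### Shifted grids -/

/-- The level-`k` cell containing `v` of the hierarchy of grids with finest mesh `δ`, translated by
`δ * a` and `δ * b`: levels alternately double the horizontal and the vertical mesh. -/
def gridCell (δ a b : ℝ) (k : ℕ) (v : Pt) : ℤ × ℤ :=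
  (⌊(v 0 / δ + a) / 2 ^ ((k + 1) / 2)⌋, ⌊(v 1 / δ + b) / 2 ^ (k / 2)⌋)

/-- Half the perimeter of a cell of level `k`. -/
def gridScale (δ : ℝ) (k : ℕ) : ℝ := δ * (2 ^ ((k + 1) / 2) + 2 ^ (k / 2))

lemma floor_div_two_pow_succ_eq_iff {t : ℝ} {m : ℕ} {c : ℤ} :
    ⌊t / 2 ^ (m + 1)⌋ = c ↔ ⌊t / 2 ^ m⌋ = 2 * c ∨ ⌊t / 2 ^ m⌋ = 2 * c + 1 := by
  have hdiv : ⌊t / 2 ^ (m + 1)⌋ = ⌊t / 2 ^ m⌋ / 2 := by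
    rw [pow_succ, ← div_div]
    exact_mod_cast Int.floor_div_natCast (t / 2 ^ m) 2
  omega

lemma abs_sub_le_of_floor_eq {δ a d s t : ℝ} (hδ : 0 < δ) (hd : 0 < d)
    (h : ⌊(s / δ + a) / d⌋ = ⌊(t / δ + a) / d⌋) : |s - t| ≤ δ * d := by
  have hlt := Int.abs_sub_lt_one_of_floor_eq_floor h
  have heq : (s / δ + a) / d - (t / δ + a) / d = (s - t) / (δ * d) := by
    field_simp
    ring
  rw [heq, abs_div, abs_of_pos (mul_pos hδ hd), div_lt_one (mul_pos hδ hd)] at hlt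
  exact hlt.le

lemma lt_of_floor_lt {δ a d s t : ℝ} (hδ : 0 < δ) (hd : 0 < d)
    (h : ⌊(s / δ + a) / d⌋ < ⌊(t / δ + a) / d⌋) : s < t := by
  by_contra! hts
  exact h.not_ge (by gcongr)

lemma dist_le_abs_add_abs (v w : Pt) : dist v w ≤ |v 0 - w 0| + |v 1 - w 1| := by
  rw [EuclideanSpace.dist_eq, Fin.sum_univ_two, Real.dist_eq, Real.dist_eq, Real.sqrt_le_left
    (by positivity)]
  nlinarith [abs_nonneg (v 0 - w 0), abs_nonneg (v 1 - w 1)]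

theorem binaryHierarchy_gridCell {δ : ℝ} (hδ : 0 < δ) (a b : ℝ) :
    BinaryHierarchy (gridCell δ a b) (gridScale δ) where
  dist_le {k v w} h := by
    obtain ⟨h₀, h₁⟩ := Prod.ext_iff.mp h
    rw [gridScale, mul_add]
    exact (dist_le_abs_add_abs v w).trans (add_le_add
      (abs_sub_le_of_floor_eq hδ (by positivity) h₀) (abs_sub_le_of_floor_eq hδ (by positivity) h₁))
  split k c := by
    obtain ⟨m, rfl | rfl⟩ := k.even_or_odd'
    · refine ⟨(2 * c.1, c.2), (2 * c.1 + 1, c.2), (EuclideanSpace.proj 0).toLinearMap,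
        fun v => ?_, fun v w hv hw => ?_⟩
      · have h₁ : (2 * m + 1) / 2 = m := by omega
        have h₂ : (2 * m + 1 + 1) / 2 = m + 1 := by omega
        have h₃ : 2 * m / 2 = m := by omega
        simp only [gridCell, Prod.ext_iff, h₁, h₂, h₃, floor_div_two_pow_succ_eq_iff, or_and_right]
      · exact lt_of_floor_lt hδ (by positivity) ((congrArg Prod.fst hv).trans_lt
          ((lt_add_one _).trans_eq (congrArg Prod.fst hw).symm))
    · refine ⟨(c.1, 2 * c.2), (c.1, 2 * c.2 + 1), (EuclideanSpace.proj 1).toLinearMap,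
        fun v => ?_, fun v w hv hw => ?_⟩
      · have h₁ : (2 * m + 1 + 1) / 2 = m + 1 := by omega
        have h₂ : (2 * m + 1 + 1 + 1) / 2 = m + 1 := by omega
        have h₃ : (2 * m + 1) / 2 = m := by omega
        simp only [gridCell, Prod.ext_iff, h₁, h₂, h₃, floor_div_two_pow_succ_eq_iff, and_or_left]
      · exact lt_of_floor_lt hδ (by positivity) ((congrArg Prod.snd hv).trans_lt
          ((lt_add_one _).trans_eq (congrArg Prod.snd hw).symm))

lemma sum_range_sub_comm {M : Type*} [AddCommGroup M] (g : ℕ → M) (m n : ℕ) :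
    ∑ i ∈ Finset.range m, (g (n + i) - g i) = ∑ i ∈ Finset.range n, (g (m + i) - g i) := by
  have h := Finset.sum_range_add g m n
  rw [add_comm m n, Finset.sum_range_add] at h
  rw [Finset.sum_sub_distrib, Finset.sum_sub_distrib, sub_eq_sub_iff_add_eq_add, add_comm, h,
    add_comm]

lemma sum_floor_sub_floor_le (x d : ℝ) (n N : ℕ) :
    ∑ s ∈ Finset.range N, ((⌊(x + (n + s : ℕ)) / d⌋ : ℝ) - ⌊(x + s) / d⌋) ≤ n * (N / d + 1) := by
  have hstep : ∀ s : ℕ, (⌊(x + (N + s : ℕ)) / d⌋ : ℝ) - ⌊(x + s) / d⌋ ≤ N / d + 1 := by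
    intro s
    have hlow := Int.lt_floor_add_one ((x + s) / d)
    have hhigh := Int.floor_le ((x + (N + s : ℕ)) / d)
    have hadd : (x + (N + s : ℕ)) / d = N / d + (x + s) / d := by
      push_cast
      ring
    linarith
  rw [sum_range_sub_comm fun s : ℕ => (⌊(x + s) / d⌋ : ℝ)]
  simpa only [Finset.card_range, nsmul_eq_mul] using
    Finset.sum_le_card_nsmul (Finset.range n) _ _ fun s _ => hstep s

lemma card_floor_ne_le (x y : ℝ) {d : ℝ} (hd : 0 < d) (N : ℕ) :
    d * ({s ∈ Finset.range N | ⌊(x + s) / d⌋ ≠ ⌊(y + s) / d⌋} : Finset ℕ).card ≤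
      (|x - y| + 1) * (N + d) := by
  wlog hxy : x ≤ y generalizing x y
  · simpa only [abs_sub_comm, ne_comm] using this y x (le_of_not_ge hxy)
  obtain ⟨n, hyn, hn⟩ : ∃ n : ℕ, y ≤ x + n ∧ (n : ℝ) ≤ |x - y| + 1 := by
    refine ⟨⌈|x - y|⌉₊, ?_, (Nat.ceil_lt_add_one (abs_nonneg _)).le⟩
    linarith [Nat.le_ceil |x - y|, neg_le_abs (x - y)]
  have hcut : ∀ s : ℕ, (if ⌊(x + s) / d⌋ ≠ ⌊(y + s) / d⌋ then 1 else 0) ≤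
      (⌊(x + (n + s : ℕ)) / d⌋ : ℝ) - ⌊(x + s) / d⌋ := by
    intro s
    have hlow : ⌊(x + s) / d⌋ ≤ ⌊(y + s) / d⌋ := Int.floor_mono (by gcongr)
    have hhigh : ⌊(y + s) / d⌋ ≤ ⌊(x + (n + s : ℕ)) / d⌋ :=
      Int.floor_mono (div_le_div_of_nonneg_right (by push_cast; linarith) hd.le)
    have : (if ⌊(x + s) / d⌋ ≠ ⌊(y + s) / d⌋ then 1 else 0) ≤
        ⌊(x + (n + s : ℕ)) / d⌋ - ⌊(x + s) / d⌋ := by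
      split_ifs <;> omega
    exact_mod_cast this
  have hcard : (({s ∈ Finset.range N | ⌊(x + s) / d⌋ ≠ ⌊(y + s) / d⌋} : Finset ℕ).card : ℝ) ≤
      n * (N / d + 1) := by
    rw [Finset.card_filter, Nat.cast_sum]
    refine le_trans ?_ (sum_floor_sub_floor_le x d n N)
    exact Finset.sum_le_sum fun s _ => by simpa using hcut s
  calc d * ({s ∈ Finset.range N | ⌊(x + s) / d⌋ ≠ ⌊(y + s) / d⌋} : Finset ℕ).card
      ≤ d * (n * (N / d + 1)) := by gcongr
    _ = n * (N + d) := by field_simp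
    _ ≤ (|x - y| + 1) * (N + d) := by gcongr

section Shift

variable {ι : Type*} (V : Finset ι) (x y : ι → ℝ) (T : Finset ℕ) {d : ℕ → ℝ}

lemma sum_card_floor_ne_le (hd : ∀ k ∈ T, 0 < d k) (N : ℕ) :
    ∑ s ∈ Finset.range N, ∑ k ∈ T,
        d k * ({v ∈ V | ⌊(x v + s) / d k⌋ ≠ ⌊(y v + s) / d k⌋} : Finset ι).card ≤
      (∑ k ∈ T, (N + d k)) * ∑ v ∈ V, (|x v - y v| + 1) := by
  rw [Finset.sum_comm, Finset.sum_mul]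
  refine Finset.sum_le_sum fun k hk => ?_
  have hcount : ∑ s ∈ Finset.range N,
      ({v ∈ V | ⌊(x v + s) / d k⌋ ≠ ⌊(y v + s) / d k⌋} : Finset ι).card =
        ∑ v ∈ V, ({s ∈ Finset.range N | ⌊(x v + s) / d k⌋ ≠ ⌊(y v + s) / d k⌋} : Finset ℕ).card :=
    Finset.sum_card_bipartiteAbove_eq_sum_card_bipartiteBelow
      fun (s : ℕ) v => ⌊(x v + s) / d k⌋ ≠ ⌊(y v + s) / d k⌋
  rw [← Finset.mul_sum, ← Nat.cast_sum, hcount, Nat.cast_sum, Finset.mul_sum, mul_comm,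
    Finset.sum_mul]
  exact Finset.sum_le_sum fun v _ => card_floor_ne_le (x v) (y v) (hd k hk) N

theorem exists_shift (hd : ∀ k ∈ T, 0 < d k) {N : ℕ} (hN : 0 < N) (c : ℝ) :
    ∃ a ∈ Set.Ico c (c + N),
      N * ∑ k ∈ T, d k * ({v ∈ V | ⌊(x v + a) / d k⌋ ≠ ⌊(y v + a) / d k⌋} : Finset ι).card ≤
        (∑ k ∈ T, (N + d k)) * ∑ v ∈ V, (|x v - y v| + 1) := by
  have haverage := sum_card_floor_ne_le V (fun v => x v + c) (fun v => y v + c) T hd N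
  simp only [add_sub_add_right_eq_sub, add_assoc] at haverage
  obtain ⟨s, hs, hle⟩ := Finset.exists_le_of_sum_le
    (f := fun s : ℕ => N * ∑ k ∈ T, d k *
      ({v ∈ V | ⌊(x v + (c + s)) / d k⌋ ≠ ⌊(y v + (c + s)) / d k⌋} : Finset ι).card)
    (g := fun _ => (∑ k ∈ T, (N + d k)) * ∑ v ∈ V, (|x v - y v| + 1))
    (Finset.nonempty_range_iff.mpr hN.ne') (by
      rw [← Finset.mul_sum, Finset.sum_const, Finset.card_range, nsmul_eq_mul]
      exact mul_le_mul_of_nonneg_left haverage (Nat.cast_nonneg N))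
  have hsN : (s : ℝ) < N := Nat.cast_lt.mpr (Finset.mem_range.mp hs)
  exact ⟨c + s, ⟨le_add_of_nonneg_right (Nat.cast_nonneg s), by gcongr⟩, hle⟩

lemma exists_shift_two_pow (K M : ℕ) {e : ℕ → ℕ} (he : ∀ k < K, e k ≤ M + 2) (c : ℝ) :
    ∃ a ∈ Set.Ico c (c + 2 ^ M), ∑ k ∈ Finset.range K, (2 : ℝ) ^ e k *
      ({v ∈ V | ⌊(x v + a) / 2 ^ e k⌋ ≠ ⌊(y v + a) / 2 ^ e k⌋} : Finset ι).card ≤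
        5 * K * ∑ v ∈ V, (|x v - y v| + 1) := by
  obtain ⟨a, ha, hle⟩ := exists_shift V x y (Finset.range K) (d := fun k => 2 ^ e k)
    (fun _ _ => by positivity) (pow_pos two_pos M) c
  push_cast at ha hle
  refine ⟨a, ha, le_of_mul_le_mul_left (hle.trans ?_) (pow_pos two_pos M)⟩
  have hpow : ∀ k ∈ Finset.range K, (2 : ℝ) ^ M + 2 ^ e k ≤ 5 * 2 ^ M := fun k hk => by
    have := pow_le_pow_right₀ one_le_two (he k (Finset.mem_range.mp hk)) (M₀ := ℝ)
    rw [pow_add] at this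
    linarith
  calc (∑ k ∈ Finset.range K, ((2 : ℝ) ^ M + 2 ^ e k)) * ∑ v ∈ V, (|x v - y v| + 1)
      ≤ (K * (5 * 2 ^ M)) * ∑ v ∈ V, (|x v - y v| + 1) := by
        gcongr
        simpa only [Finset.card_range, nsmul_eq_mul] using Finset.sum_le_card_nsmul _ _ _ hpow
    _ = 2 ^ M * (5 * K * ∑ v ∈ V, (|x v - y v| + 1)) := by ring

end Shift

lemma floor_eq_zero_of_mem_Ico {δ a p t : ℝ} {M : ℕ} (hδ : 0 < δ) (ht : |t - p| ≤ δ * 2 ^ M)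
    (ha : a ∈ Set.Ico (2 ^ M - p / δ) (2 ^ M - p / δ + 2 ^ M)) :
    ⌊(t / δ + a) / 2 ^ (M + 2)⌋ = 0 := by
  have hpow : (2 : ℝ) ^ (M + 2) = 4 * 2 ^ M := by ring
  have hpos : (0 : ℝ) < 2 ^ M := by positivity
  have ht' : |t / δ - p / δ| ≤ 2 ^ M := by
    rwa [← sub_div, abs_div, abs_of_pos hδ, div_le_iff₀' hδ]
  obtain ⟨hlow, hhigh⟩ := abs_le.mp ht'
  rw [Int.floor_eq_zero_iff, hpow]
  exact ⟨div_nonneg (by linarith [ha.1]) (by positivity),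
    (div_lt_one (by positivity)).mpr (by linarith [ha.2])⟩

lemma gridScale_succ_le {δ : ℝ} (hδ : 0 ≤ δ) (k : ℕ) :
    gridScale δ (k + 1) ≤ 4 * δ * 2 ^ (k / 2) := by
  have h₁ : (2 : ℝ) ^ ((k + 1 + 1) / 2) ≤ 2 ^ (k / 2 + 1) :=
    pow_le_pow_right₀ one_le_two (by omega)
  have h₂ : (2 : ℝ) ^ ((k + 1) / 2) ≤ 2 ^ (k / 2 + 1) := pow_le_pow_right₀ one_le_two (by omega)
  rw [gridScale]
  calc δ * ((2 : ℝ) ^ ((k + 1 + 1) / 2) + 2 ^ ((k + 1) / 2))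
      ≤ δ * (2 ^ (k / 2 + 1) + 2 ^ (k / 2 + 1)) := by gcongr
    _ = 4 * δ * 2 ^ (k / 2) := by ring

section GridCost

variable {S : Finset Pt} (G : SimpleGraph S) {δ : ℝ}

lemma card_cutDarts_gridCell_le (a b : ℝ) (k : ℕ) :
    (cutDarts G (gridCell δ a b k) S).card ≤
      ({d : G.Dart | ⌊((d.fst : Pt) 0 / δ + a) / 2 ^ ((k + 1) / 2)⌋ ≠
          ⌊((d.snd : Pt) 0 / δ + a) / 2 ^ ((k + 1) / 2)⌋} : Finset G.Dart).card +
        ({d : G.Dart | ⌊((d.fst : Pt) 1 / δ + b) / 2 ^ (k / 2)⌋ ≠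
          ⌊((d.snd : Pt) 1 / δ + b) / 2 ^ (k / 2)⌋} : Finset G.Dart).card := by
  refine (Finset.card_le_card fun d hd => ?_).trans (Finset.card_union_le _ _)
  have hne := (mem_cutDarts.mp hd).2
  rw [gridCell, gridCell, Ne, Prod.mk.injEq, not_and_or] at hne
  simpa using hne

lemma card_cutDarts_mul_gridScale_le (hδ : 0 ≤ δ) (a b : ℝ) (k : ℕ) :
    (cutDarts G (gridCell δ a b k) S).card * gridScale δ (k + 1) ≤ 4 * δ *
      (2 ^ ((k + 1) / 2) * ({d : G.Dart | ⌊((d.fst : Pt) 0 / δ + a) / 2 ^ ((k + 1) / 2)⌋ ≠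
          ⌊((d.snd : Pt) 0 / δ + a) / 2 ^ ((k + 1) / 2)⌋} : Finset G.Dart).card +
        2 ^ (k / 2) * ({d : G.Dart | ⌊((d.fst : Pt) 1 / δ + b) / 2 ^ (k / 2)⌋ ≠
          ⌊((d.snd : Pt) 1 / δ + b) / 2 ^ (k / 2)⌋} : Finset G.Dart).card) := by
  have hcard := Nat.cast_le (α := ℝ).mpr (card_cutDarts_gridCell_le G (δ := δ) a b k)
  have hscale := gridScale_succ_le hδ k
  have hpow : (2 : ℝ) ^ (k / 2) ≤ 2 ^ ((k + 1) / 2) := pow_le_pow_right₀ one_le_two (by omega)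
  rw [Nat.cast_add] at hcard
  refine (mul_le_mul_of_nonneg_left hscale (Nat.cast_nonneg _)).trans
    ((mul_le_mul_of_nonneg_right hcard (by positivity)).trans ?_)
  rw [add_mul, mul_add]
  refine add_le_add ?_ (by linarith)
  rw [mul_comm, mul_assoc]
  gcongr

lemma mul_sum_darts_le (hδ : 0 < δ) (i : Fin 2) :
    δ * ∑ d : G.Dart, (|(d.fst : Pt) i / δ - (d.snd : Pt) i / δ| + 1) ≤
      ∑ d : G.Dart, (dist (d.fst : Pt) d.snd + δ) := by
  rw [Finset.mul_sum]
  refine Finset.sum_le_sum fun d _ => ?_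
  rw [mul_add, mul_one, ← sub_div, abs_div, abs_of_pos hδ, mul_div_cancel₀ _ hδ.ne', dist_eq_norm]
  gcongr
  exact PiLp.norm_apply_le ((d.fst : Pt) - (d.snd : Pt)) i

theorem exists_hierarchyCost_gridCell_le (hδ : 0 < δ) {M : ℕ} (p : Pt)
    (hp : ∀ v ∈ S, ∀ i, |v i - p i| ≤ δ * 2 ^ M) :
    ∃ a b, (∀ v ∈ S, gridCell δ a b (2 * (M + 2)) v = (0, 0)) ∧
      hierarchyCost G (gridCell δ a b) (gridScale δ) (2 * (M + 2)) S ≤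
        2 * δ * S.card + 80 * (M + 2) * ∑ d : G.Dart, (dist (d.fst : Pt) d.snd + δ) := by
  obtain ⟨a, ha, hacost⟩ := exists_shift_two_pow Finset.univ
    (fun d : G.Dart => (d.fst : Pt) 0 / δ) (fun d => (d.snd : Pt) 0 / δ) (2 * (M + 2)) M
    (e := fun k => (k + 1) / 2) (fun k hk => by omega) (2 ^ M - p 0 / δ)
  obtain ⟨b, hb, hbcost⟩ := exists_shift_two_pow Finset.univ
    (fun d : G.Dart => (d.fst : Pt) 1 / δ) (fun d => (d.snd : Pt) 1 / δ) (2 * (M + 2)) M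
    (e := fun k => k / 2) (fun k hk => by omega) (2 ^ M - p 1 / δ)
  refine ⟨a, b, fun v hv => ?_, ?_⟩
  · have h₀ : (2 * (M + 2) + 1) / 2 = M + 2 := by omega
    have h₁ : 2 * (M + 2) / 2 = M + 2 := by omega
    rw [gridCell, h₀, h₁, floor_eq_zero_of_mem_Ico hδ (hp v hv 0) ha,
      floor_eq_zero_of_mem_Ico hδ (hp v hv 1) hb]
  · have hsum := Finset.sum_le_sum fun k (_ : k ∈ Finset.range (2 * (M + 2))) =>
      card_cutDarts_mul_gridScale_le G hδ.le a b k
    rw [← Finset.mul_sum, Finset.sum_add_distrib] at hsum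
    have hshift := mul_le_mul_of_nonneg_left (add_le_add hacost hbcost) (by positivity : 0 ≤ 4 * δ)
    have hdarts := mul_le_mul_of_nonneg_left
      (add_le_add (mul_sum_darts_le G hδ 0) (mul_sum_darts_le G hδ 1))
      (by positivity : (0 : ℝ) ≤ 40 * (M + 2))
    push_cast at hshift
    have hbase : gridScale δ 0 = 2 * δ := by norm_num [gridScale, mul_comm]
    rw [hierarchyCost, hbase]
    linarith

end GridCost

/-! ### Lengths of graphs and spanning trees -/

section GraphLength

variable {S : Finset Pt} {G H : SimpleGraph ↥S}

lemma edgeLen_eq_edgeLength_map (e : Sym2 ↥S) : edgeLen e = edgeLength (e.map (↑)) := by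
  induction e with
  | _ u v => rfl

lemma edgeLen_nonneg (e : Sym2 ↥S) : 0 ≤ edgeLen e :=
  (edgeLength_nonneg _).trans_eq (edgeLen_eq_edgeLength_map e).symm

lemma graphLen_eq_sum (G : SimpleGraph ↥S) : graphLen G = ∑ e ∈ G.edgeFinset, edgeLen e := by
  rw [graphLen, ← SimpleGraph.coe_edgeFinset, finsum_mem_coe_finset]

lemma sum_edgeLen_le_graphLen {F : Finset (Sym2 ↥S)} (hF : ∀ e ∈ F, e ∈ G.edgeSet) :
    ∑ e ∈ F, edgeLen e ≤ graphLen G := by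
  rw [graphLen_eq_sum]
  exact Finset.sum_le_sum_of_subset_of_nonneg
    (fun e he => SimpleGraph.mem_edgeFinset.mpr (hF e he)) fun e _ _ => edgeLen_nonneg e

lemma graphLen_mono (h : G ≤ H) : graphLen G ≤ graphLen H := by
  rw [graphLen_eq_sum G]
  exact sum_edgeLen_le_graphLen fun e he =>
    SimpleGraph.edgeSet_mono h (SimpleGraph.mem_edgeFinset.mp he)

lemma dist_le_sum_edgeLen {u v : ↥S} (p : G.Walk u v) :
    dist (u : Pt) v ≤ (p.edges.map edgeLen).sum := by
  induction p with
  | nil => simp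
  | cons h p ih =>
    rw [SimpleGraph.Walk.edges_cons, List.map_cons, List.sum_cons]
    exact (dist_triangle _ _ _).trans (add_le_add_right ih _)

lemma dist_le_graphLen (hG : G.Preconnected) (u v : ↥S) : dist (u : Pt) v ≤ graphLen G := by
  obtain ⟨p, hp⟩ := (hG u v).exists_isPath
  refine (dist_le_sum_edgeLen p).trans ?_
  rw [← List.sum_toFinset _ hp.isTrail.edges_nodup]
  exact sum_edgeLen_le_graphLen fun e he => p.edges_subset_edgeSet (List.mem_toFinset.mp he)

lemma graphLen_pos [Nontrivial ↥S] (hG : G.Preconnected) : 0 < graphLen G := by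
  obtain ⟨u, v, huv⟩ := exists_pair_ne ↥S
  exact (dist_pos.mpr (Subtype.coe_ne_coe.mpr huv)).trans_le (dist_le_graphLen hG u v)

lemma sum_darts_dist_eq_two_mul_graphLen (G : SimpleGraph ↥S) :
    ∑ d : G.Dart, dist (d.fst : Pt) d.snd = 2 * graphLen G := by
  rw [graphLen_eq_sum, Finset.mul_sum, ← Finset.sum_fiberwise_of_maps_to
    (g := SimpleGraph.Dart.edge) (t := G.edgeFinset) fun d _ =>
      SimpleGraph.mem_edgeFinset.mpr d.edge_mem]
  refine Finset.sum_congr rfl fun e he => ?_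
  rw [Finset.sum_congr rfl (g := fun _ => edgeLen e) fun d hd => ?_, Finset.sum_const,
    G.dart_edge_fiber_card e (SimpleGraph.mem_edgeFinset.mp he), two_nsmul, two_mul]
  rw [← (Finset.mem_filter.mp hd).2]
  rfl

lemma card_dart_le_of_isTree (hG : G.IsTree) : Fintype.card G.Dart ≤ 2 * S.card := by
  have hcard := hG.card_edgeFinset
  rw [Fintype.card_coe] at hcard
  rw [G.dart_card_eq_twice_card_edges]
  omega

end GraphLength

namespace PlaneSpanning

variable {S : Finset Pt} {E : Finset (Sym2 Pt)}

lemma preconnected_comap {κ : Type*} {col : Pt → κ} (hE : PlaneSpanning col S E) :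
    ((SimpleGraph.fromEdgeSet (E : Set (Sym2 Pt))).comap ((↑) : S → Pt)).Preconnected := by
  rintro ⟨u, hu⟩ ⟨v, hv⟩
  obtain ⟨walk⟩ := hE.reachable u hu v hv
  induction walk with
  | nil => rfl
  | cons hadj _ ih =>
    have hw := hE.mem_right (hE.adj_iff.mp hadj)
    exact (SimpleGraph.Adj.reachable (SimpleGraph.comap_adj.mpr hadj)).trans (ih hw hv)

lemma graphLen_le {κ : Type*} {col : Pt → κ} (hE : PlaneSpanning col S E) {T : SimpleGraph ↥S}
    (hT : T ≤ (SimpleGraph.fromEdgeSet (E : Set (Sym2 Pt))).comap (↑)) :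
    graphLen T ≤ totalLength E := by
  have hmem : ∀ e ∈ T.edgeFinset, e.map (↑) ∈ E := fun e => by
    induction e with
    | _ u v => exact fun he => hE.adj_iff.mp (hT (SimpleGraph.mem_edgeFinset.mp he))
  rw [graphLen_eq_sum, Finset.sum_congr rfl fun e _ => edgeLen_eq_edgeLength_map e,
    ← Finset.sum_image (Sym2.map.injective Subtype.val_injective).injOn]
  exact Finset.sum_le_sum_of_subset_of_nonneg (Finset.image_subset_iff.mpr hmem)
    fun e _ _ => edgeLength_nonneg e

theorem exists_isBST {col : Pt → Bool} (hE : PlaneSpanning col S E) (hS : S.Nonempty) :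
    ∃ T : SimpleGraph ↥S, IsBST col T ∧ PlaneGraph T ∧ graphLen T ≤ totalLength E := by
  have : Nonempty ↥S := hS.to_subtype
  obtain ⟨T, hTE, hT⟩ := (SimpleGraph.connected_iff _).mpr ⟨hE.preconnected_comap, this⟩
    |>.exists_isTree_le
  have hmem : ∀ {u v}, T.Adj u v → s((u : Pt), (v : Pt)) ∈ E := fun h => hE.adj_iff.mp (hTE h)
  refine ⟨T, ⟨hT, fun u v h => hE.color_ne (hmem h)⟩, ?_, hE.graphLen_le hTE⟩
  rintro _ h₁ _ h₂ hne ⟨a, b, c, d, rfl, rfl, x, hab, hcd⟩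
  exact Set.disjoint_left.mp (hE.pairwiseDisjoint (hmem h₁) (hmem h₂)
    ((Sym2.map.injective Subtype.val_injective).ne hne)) hab hcd

end PlaneSpanning

lemma logb_two_natCast_nonneg (n : ℕ) : 0 ≤ Real.logb 2 n :=
  div_nonneg (Real.log_natCast_nonneg n) (Real.log_nonneg one_le_two)

lemma clog_two_add_two_le (n : ℕ) : (Nat.clog 2 n : ℝ) + 2 ≤ 3 * (1 + Real.logb 2 n) := by
  have hlog := logb_two_natCast_nonneg n
  have hceil := Int.ceil_lt_add_one (Real.logb 2 n)
  have hclog : ((Nat.clog 2 n : ℤ) : ℝ) = ⌈Real.logb 2 n⌉ := by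
    rw [← Int.clog_natCast (R := ℝ), ← Real.ceil_logb_natCast (b := 2) (Nat.cast_nonneg n),
      Nat.cast_ofNat]
  rw [Int.cast_natCast] at hclog
  linarith

lemma exists_hierarchyCost_le_of_isTree {S : Finset Pt} [Nontrivial ↥S] {G : SimpleGraph ↥S}
    (hG : G.IsTree) :
    ∃ (δ a b : ℝ) (K : ℕ), 0 < δ ∧ (∀ v ∈ S, gridCell δ a b K v = (0, 0)) ∧
      hierarchyCost G (gridCell δ a b) (gridScale δ) K S ≤
        962 * (1 + Real.logb 2 S.card) * graphLen G := by
  obtain ⟨p⟩ : Nonempty ↥S := inferInstance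
  have hL := graphLen_pos hG.connected.preconnected
  have hn : (0 : ℝ) < S.card := Nat.cast_pos.mpr (Finset.card_pos.mpr ⟨p, p.2⟩)
  have hδ : 0 < graphLen G / S.card := div_pos hL hn
  have hLδ : graphLen G / S.card * S.card = graphLen G := div_mul_cancel₀ _ hn.ne'
  have hle : graphLen G ≤ graphLen G / S.card * 2 ^ Nat.clog 2 S.card := by
    refine hLδ.symm.le.trans (mul_le_mul_of_nonneg_left ?_ hδ.le)
    exact_mod_cast Nat.le_pow_clog one_lt_two S.card
  obtain ⟨a, b, hroot, hcost⟩ := exists_hierarchyCost_gridCell_le G hδ (p : Pt) fun v hv i =>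
    ((PiLp.norm_apply_le (v - (p : Pt)) i).trans_eq (dist_eq_norm _ _).symm).trans
      ((dist_le_graphLen hG.connected.preconnected ⟨v, hv⟩ p).trans hle)
  refine ⟨_, a, b, _, hδ, hroot, hcost.trans ?_⟩
  have hdarts : ∑ d : G.Dart, (dist (d.fst : Pt) d.snd + graphLen G / S.card) ≤
      4 * graphLen G := by
    have hcardDart := mul_le_mul_of_nonneg_right
      (Nat.cast_le (α := ℝ).mpr (card_dart_le_of_isTree hG)) hδ.le
    push_cast at hcardDart
    rw [Finset.sum_add_distrib, sum_darts_dist_eq_two_mul_graphLen, Finset.sum_const,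
      Finset.card_univ, nsmul_eq_mul]
    linarith
  have hlog := logb_two_natCast_nonneg S.card
  calc _ ≤ 2 * graphLen G + 80 * (3 * (1 + Real.logb 2 S.card)) * (4 * graphLen G) := by
        rw [mul_assoc 2, hLδ]
        gcongr
        exact clog_two_add_two_le S.card
    _ ≤ _ := by nlinarith

theorem exists_planeSpanning_totalLength_le {S : Finset Pt} (hgen : GenPos S) {col : Pt → Bool}
    {G : SimpleGraph ↥S} (hG : G.Connected) (hcol : Bichromatic col G) :
    ∃ E, PlaneSpanning col S E ∧
      totalLength E ≤ 962 * (1 + Real.logb 2 S.card) * graphLen G := by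
  obtain ⟨p⟩ := hG.nonempty
  have hlog := logb_two_natCast_nonneg S.card
  obtain hS | hS := subsingleton_or_nontrivial ↥S
  · have hSp : S = {(p : Pt)} := Finset.eq_singleton_iff_unique_mem.mpr
      ⟨p.2, fun v hv => congrArg Subtype.val (Subsingleton.elim (⟨v, hv⟩ : ↥S) p)⟩
    have hlen := dist_nonneg.trans (dist_le_graphLen hG.preconnected p p)
    refine ⟨∅, hSp ▸ PlaneSpanning.singleton col p, ?_⟩
    rw [totalLength, Finset.sum_empty]
    positivity
  obtain ⟨T, hTG, hT⟩ := hG.exists_isTree_le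
  obtain ⟨δ, a, b, K, hδ, hroot, hcost⟩ := exists_hierarchyCost_le_of_isTree hT
  obtain ⟨E, hE, hElen⟩ := (binaryHierarchy_gridCell hδ a b).exists_planeSpanning hgen
    hT.connected.preconnected (fun u v h => hcol u v (hTG h)) hroot
  refine ⟨E, hE, hElen.trans (hcost.trans ?_)⟩
  gcongr
  exact graphLen_mono hTG

theorem exists_plane_bichromatic_spanning_tree_log_approx_general :
    ∃ C : ℝ, 0 < C ∧
      ∀ (S : Finset Pt) (col : Pt → Bool), GenPos S →
        ∀ G : SimpleGraph ↥S, G.Connected → Bichromatic col G →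
          ∃ T : SimpleGraph ↥S, IsBST col T ∧ PlaneGraph T ∧
            graphLen T ≤ C * (1 + Real.logb 2 (S.card : ℝ)) * graphLen G := by
  refine ⟨962, by norm_num, fun S col hgen G hG hcol => ?_⟩
  obtain ⟨E, hE, hElen⟩ := exists_planeSpanning_totalLength_le hgen hG hcol
  obtain ⟨T, hT, hplane, hTlen⟩ := hE.exists_isBST (hG.nonempty.elim fun p => ⟨p, p.2⟩)
  exact ⟨T, hT, hplane, hTlen.trans hElen⟩

/-- There is a constant `C > 0` such that for every bicolored set
`S` of `n ≥ 2` points in general position with at least one red and one blue point,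
there is a plane bichromatic spanning tree of `S` of total length at most
`C · (1 + log₂ n)` times the length of a minimum bichromatic spanning tree of `S`. -/
theorem exists_plane_bichromatic_spanning_tree_log_approx :
    ∃ C : ℝ, 0 < C ∧
      ∀ (S : Finset Pt) (col : Pt → Bool), GenPos S → 2 ≤ S.card →
        (∃ r ∈ S, col r = true) → (∃ b ∈ S, col b = false) →
        ∀ Tmin : SimpleGraph ↥S, IsMinBST col Tmin →
          ∃ T : SimpleGraph ↥S, IsBST col T ∧ PlaneGraph T ∧
            graphLen T ≤ C * (1 + Real.logb 2 (S.card : ℝ)) * graphLen Tmin := by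
  obtain ⟨C, hC, h⟩ := exists_plane_bichromatic_spanning_tree_log_approx_general
  exact ⟨C, hC, fun S col hgen _ _ _ Tmin hmin => h S col hgen Tmin hmin.1.1.connected hmin.1.2⟩
end
end
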